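/- Under the non-stationary zero-returns model with mixing, and with the kernel estimators defined from a kernel and bandwidth satisfying the kernel and bandwidth assumption, if there exists h ∈ {1,…,m} such that Δ_h ≠ 0, then the index κ̂_m = Σ_{h=1}^m Δ̂_h² converges in probability, as n → ∞, to the strictly positive constant C = Σ_{h=1}^m Δ_h² > 0. -/

import Mathlib

open MeasureTheory ProbabilityTheory Filter Set

namespace ZeroReturnsNS

variable {Ω : Type*} [MeasurableSpace Ω]

/-- A function is piecewise Lipschitz on `(0,1]` if `(0,1]` is a finite disjoint union of
intervals on each of which the function is Lipschitz. -/
def PiecewiseLipschitzOn01 (f : ℝ → ℝ) : Prop :=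
  ∃ (p : ℕ) (I : Fin p → Set ℝ) (C : Fin p → NNReal),
    (∀ l, (I l).OrdConnected) ∧
    Pairwise (Function.onFun Disjoint I) ∧
    (⋃ l, I l) = Set.Ioc (0 : ℝ) 1 ∧
    ∀ l, LipschitzOnWith (C l) f (I l)

/-- The triangular array of returns `r_t = v(t/n) ε_t`. -/
noncomputable def rproc (v : ℝ → ℝ) (ε : ℕ → ℕ → Ω → ℝ) (n t : ℕ) (ω : Ω) : ℝ :=
  v ((t : ℝ) / n) * ε n t ω

/-- The zero-return indicator `a_t = 1_{r_t ≠ 0}`. -/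
noncomputable def aproc (v : ℝ → ℝ) (ε : ℕ → ℕ → Ω → ℝ) (n t : ℕ) (ω : Ω) : ℝ :=
  if rproc v ε n t ω ≠ 0 then 1 else 0

/-- The σ-field `σ(ε_u : u ≤ t)` of the past of the `n`-th row of the array. -/
noncomputable def pastField (ε : ℕ → ℕ → Ω → ℝ) (n t : ℕ) : MeasurableSpace Ω :=
  ⨆ u ∈ {u : ℕ | u ≤ t}, MeasurableSpace.comap (ε n u) inferInstance

/-- The σ-field `σ(ε_u : u ≥ t)` of the future of the `n`-th row of the array. -/
noncomputable def futureField (ε : ℕ → ℕ → Ω → ℝ) (n t : ℕ) : MeasurableSpace Ω :=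
  ⨆ u ∈ {u : ℕ | t ≤ u}, MeasurableSpace.comap (ε n u) inferInstance

/-- The strong (α-)mixing coefficients of `(ε_t)`:
`α_ε(h) = sup { |P(A∩B) - P(A)P(B)| : A ∈ σ(ε_u : u ≤ t), B ∈ σ(ε_u : u ≥ t+h) }`. -/
noncomputable def alphaMix (μ : Measure Ω) (ε : ℕ → ℕ → Ω → ℝ) (h : ℕ) : ℝ :=
  ⨆ n : ℕ, ⨆ t : ℕ, sSup {x : ℝ | ∃ A B : Set Ω,
    MeasurableSet[pastField ε n t] A ∧ MeasurableSet[futureField ε n (t + h)] B ∧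
    x = |(μ (A ∩ B)).toReal - (μ A).toReal * (μ B).toReal|}

/-- `K_{ti} = K((t-i)/(nb))` for `t ≠ i`, and `K_{tt} = 0`. -/
noncomputable def Kw (K : ℝ → ℝ) (b : ℕ → ℝ) (n t i : ℕ) : ℝ :=
  if t = i then 0 else K (((t : ℝ) - (i : ℝ)) / ((n : ℝ) * b n))

/-- The kernel weights `w_{tj}(b) = K_{tj} / Σ_{i=1}^n K_{ti}`. -/
noncomputable def wgt (K : ℝ → ℝ) (b : ℕ → ℝ) (n t j : ℕ) : ℝ :=
  Kw K b n t j / ∑ i ∈ Finset.Icc 1 n, Kw K b n t i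

/-- The kernel estimator `p̂_t = Σ_{j=1}^n w_{tj}(b) a_j` of `P(a_t = 1)`. -/
noncomputable def phat (v : ℝ → ℝ) (ε : ℕ → ℕ → Ω → ℝ) (K : ℝ → ℝ) (b : ℕ → ℝ)
    (n t : ℕ) (ω : Ω) : ℝ :=
  ∑ j ∈ Finset.Icc 1 n, wgt K b n t j * aproc v ε n j ω

/-- The kernel estimator `p̂_{t,t-h} = Σ_{j=1+h}^n w_{tj}(b) a_j a_{j-h}` of
`P(a_t a_{t-h} = 1)`. -/
noncomputable def phat2 (v : ℝ → ℝ) (ε : ℕ → ℕ → Ω → ℝ) (K : ℝ → ℝ) (b : ℕ → ℝ)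
    (n h t : ℕ) (ω : Ω) : ℝ :=
  ∑ j ∈ Finset.Icc (h + 1) n, wgt K b n t j * (aproc v ε n j ω * aproc v ε n (j - h) ω)

/-- `γ̂_{ar²}(h) = (n-h)⁻¹ Σ_{t=1+h}^n r_t² p̂_{t,t-h}/p̂_t`
(terms with `p̂_t = 0` are set to zero). -/
noncomputable def gammaAr2 (v : ℝ → ℝ) (ε : ℕ → ℕ → Ω → ℝ) (K : ℝ → ℝ) (b : ℕ → ℝ)
    (n h : ℕ) (ω : Ω) : ℝ :=
  ((n : ℝ) - (h : ℝ))⁻¹ * ∑ t ∈ Finset.Icc (h + 1) n, (rproc v ε n t ω) ^ 2 *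
    (if phat v ε K b n t ω = 0 then 0 else phat2 v ε K b n h t ω / phat v ε K b n t ω)

/-- `γ̂_0(h) = n⁻¹ Σ_{t=1+h}^n r_t r_{t-h}`. -/
noncomputable def gammaHat0 (v : ℝ → ℝ) (ε : ℕ → ℕ → Ω → ℝ) (n h : ℕ) (ω : Ω) : ℝ :=
  (n : ℝ)⁻¹ * ∑ t ∈ Finset.Icc (h + 1) n, rproc v ε n t ω * rproc v ε n (t - h) ω

/-- `γ̂_a(h) = n⁻¹ Σ_{t=1+h}^n a_t a_{t-h}`. -/
noncomputable def gammaHatA (v : ℝ → ℝ) (ε : ℕ → ℕ → Ω → ℝ) (n h : ℕ) (ω : Ω) : ℝ :=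
  (n : ℝ)⁻¹ * ∑ t ∈ Finset.Icc (h + 1) n, aproc v ε n t ω * aproc v ε n (t - h) ω

/-- `ρ̂_0(h) = γ̂_0(h)/γ̂_0(0)`. -/
noncomputable def rhoHat0 (v : ℝ → ℝ) (ε : ℕ → ℕ → Ω → ℝ) (n h : ℕ) (ω : Ω) : ℝ :=
  gammaHat0 v ε n h ω / gammaHat0 v ε n 0 ω

/-- `ρ̂_vpr(h) = (γ̂_0(0)/γ̂_{ar²}(h)) ρ̂_0(h)`. -/
noncomputable def rhoHatVpr (v : ℝ → ℝ) (ε : ℕ → ℕ → Ω → ℝ) (K : ℝ → ℝ) (b : ℕ → ℝ)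
    (n h : ℕ) (ω : Ω) : ℝ :=
  (gammaHat0 v ε n 0 ω / gammaAr2 v ε K b n h ω) * rhoHat0 v ε n h ω

/-- `ρ̂_pr(h) = ρ̂_0(h) γ̂_a(0)/γ̂_a(h)`. -/
noncomputable def rhoHatPr (v : ℝ → ℝ) (ε : ℕ → ℕ → Ω → ℝ) (n h : ℕ) (ω : Ω) : ℝ :=
  rhoHat0 v ε n h ω * (gammaHatA v ε n 0 ω / gammaHatA v ε n h ω)

end ZeroReturnsNS

namespace ZeroReturnsNS

/-- The empirical index component `Δ̂_h`. -/
noncomputable def DeltaHat (v : ℝ → ℝ) (ε : ℕ → ℕ → Ω → ℝ) (K : ℝ → ℝ) (b : ℕ → ℝ)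
    (n h : ℕ) (ω : Ω) : ℝ :=
  ((n : ℝ)⁻¹ * ∑ t ∈ Finset.Icc 1 n, (rproc v ε n t ω) ^ 2) / gammaAr2 v ε K b n h ω
    - ((n : ℝ)⁻¹ * ∑ t ∈ Finset.Icc 1 n, aproc v ε n t ω)
      / (((n : ℝ) - (h : ℝ))⁻¹ *
          ∑ t ∈ Finset.Icc (h + 1) n, aproc v ε n t ω * aproc v ε n (t - h) ω)

/-- The population index component
`Δ_h = (∫₀¹ v² g_0)/(∫₀¹ v² g_h) − (∫₀¹ g_0)/(∫₀¹ g_h)`. -/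
noncomputable def Delta (v : ℝ → ℝ) (g : ℕ → ℝ → ℝ) (h : ℕ) : ℝ :=
  (∫ s in Set.Ioc (0 : ℝ) 1, (v s) ^ 2 * g 0 s) /
      (∫ s in Set.Ioc (0 : ℝ) 1, (v s) ^ 2 * g h s)
    - (∫ s in Set.Ioc (0 : ℝ) 1, g 0 s) / (∫ s in Set.Ioc (0 : ℝ) 1, g h s)

/-- The average of `y 1, …, y n` is the integral of the step function `u ↦ y ⌈n u⌉`. -/
lemma average_eq_integral_ceil (y : ℕ → ℝ) (n : ℕ) (hn : 0 < n) :
    (n : ℝ)⁻¹ * ∑ t ∈ Finset.Icc 1 n, y t = ∫ u in Set.Ioc (0 : ℝ) 1, y ⌈(n : ℝ) * u⌉₊ := by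
  have hn' : (0 : ℝ) < n := by exact_mod_cast hn
  have key : ∀ k : ℕ, ∀ u ∈ Set.Ioc ((k : ℝ) / n) (((k + 1 : ℕ) : ℝ) / n),
      y ⌈(n : ℝ) * u⌉₊ = y (k + 1) := by
    intro k u hu
    congr 1
    rw [Nat.ceil_eq_iff (by omega)]
    have h1 := hu.1
    have h2 := hu.2
    rw [div_lt_iff₀ hn'] at h1
    rw [le_div_iff₀ hn'] at h2
    simp only [Nat.add_sub_cancel]
    constructor <;> nlinarith
  have hle : ∀ k : ℕ, (k : ℝ) / n ≤ ((k + 1 : ℕ) : ℝ) / n := by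
    intro k
    gcongr
    exact_mod_cast Nat.le_succ k
  have hsum := intervalIntegral.sum_integral_adjacent_intervals (μ := volume)
    (f := fun u : ℝ => y ⌈(n : ℝ) * u⌉₊) (a := fun k : ℕ => (k : ℝ) / n) (n := n) (by
      intro k _
      rw [intervalIntegrable_iff_integrableOn_Ioc_of_le (hle k)]
      exact (integrableOn_const (C := y (k + 1)) (by simp)).congr_fun
        (fun u hu => (key k u hu).symm) measurableSet_Ioc)
  simp only [Nat.cast_zero, zero_div, div_self hn'.ne'] at hsum
  rw [intervalIntegral.integral_of_le zero_le_one] at hsum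
  rw [← hsum, Finset.mul_sum, Finset.range_eq_Ico, ← Finset.sum_Ico_add_right_sub_eq (c := 1)]
  have : Finset.Icc 1 n = Finset.Ico (0 + 1) (n + 1) := by ext; simp
  rw [this]
  refine Finset.sum_congr rfl fun t ht => ?_
  obtain ⟨k, rfl⟩ : ∃ k, t = k + 1 := ⟨t - 1, by simp at ht; omega⟩
  simp only [Nat.add_sub_cancel]
  rw [intervalIntegral.integral_of_le (hle k), setIntegral_congr_fun measurableSet_Ioc (key k)]
  rw [setIntegral_const]
  simp only [Measure.real, Real.volume_Ioc, smul_eq_mul]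
  rw [ENNReal.toReal_ofReal (by linarith [hle k])]
  push_cast
  field_simp
  ring

lemma ceil_mem_Icc {n : ℕ} {u : ℝ} (hn : 0 < n) (hu : u ∈ Set.Ioc (0 : ℝ) 1) :
    1 ≤ ⌈(n : ℝ) * u⌉₊ ∧ ⌈(n : ℝ) * u⌉₊ ≤ n := by
  have hn' : (0 : ℝ) < n := by exact_mod_cast hn
  constructor
  · exact Nat.one_le_ceil_iff.2 (mul_pos hn' hu.1)
  · exact Nat.ceil_le.2 (by nlinarith [hu.2])

/-- Averages of bounded triangular arrays converge to the integral of the local limit. -/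
lemma tendsto_average_of_ae_tendsto (x : ℕ → ℕ → ℝ) (B : ℝ)
    (hB : ∀ n t, 1 ≤ t → t ≤ n → |x n t| ≤ B) (φ : ℝ → ℝ)
    (hx : ∀ᵐ u ∂(volume.restrict (Set.Ioc (0 : ℝ) 1)),
      Tendsto (fun n : ℕ => x n ⌈(n : ℝ) * u⌉₊) atTop (nhds (φ u))) :
    Tendsto (fun n : ℕ => (n : ℝ)⁻¹ * ∑ t ∈ Finset.Icc 1 n, x n t) atTop
      (nhds (∫ u in Set.Ioc (0 : ℝ) 1, φ u)) ∧ IntegrableOn φ (Set.Ioc (0 : ℝ) 1) := by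
  have hmeas : ∀ n : ℕ, AEStronglyMeasurable (fun u : ℝ => x n ⌈(n : ℝ) * u⌉₊)
      (volume.restrict (Set.Ioc (0 : ℝ) 1)) := by
    intro n
    have : Measurable (fun u : ℝ => x n ⌈(n : ℝ) * u⌉₊) :=
      (measurable_of_countable (x n)).comp (Nat.measurable_ceil.comp (measurable_const_mul _))
    exact this.aestronglyMeasurable
  have hbd : ∀ n : ℕ, ∀ᵐ u ∂(volume.restrict (Set.Ioc (0 : ℝ) 1)),
      ‖x (n + 1) ⌈((n + 1 : ℕ) : ℝ) * u⌉₊‖ ≤ B := by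
    intro n
    filter_upwards [ae_restrict_mem measurableSet_Ioc] with u hu
    obtain ⟨h1, h2⟩ := ceil_mem_Icc (Nat.succ_pos n) hu
    exact hB _ _ h1 h2
  constructor
  · rw [← tendsto_add_atTop_iff_nat 1]
    simp_rw [fun n : ℕ => average_eq_integral_ceil (x (n + 1)) (n + 1) (Nat.succ_pos n)]
    refine tendsto_integral_of_dominated_convergence (fun _ => B) (fun n => hmeas (n + 1))
      (integrable_const B) hbd ?_
    filter_upwards [hx] with u hu
    exact (tendsto_add_atTop_iff_nat (f := fun n : ℕ => x n ⌈(n : ℝ) * u⌉₊) 1).2 hu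
  · have hφ := aestronglyMeasurable_of_tendsto_ae atTop hmeas hx
    refine Integrable.of_bound hφ B ?_
    filter_upwards [hx, ae_all_iff.2 hbd] with u hu hb
    exact le_of_tendsto
      ((tendsto_add_atTop_iff_nat (f := fun n : ℕ => x n ⌈(n : ℝ) * u⌉₊) 1).2 hu).norm
      (Eventually.of_forall hb)

lemma tendsto_ceil_div {u : ℝ} (hu : 0 ≤ u) :
    Tendsto (fun n : ℕ => (⌈(n : ℝ) * u⌉₊ : ℝ) / n) atTop (nhds u) := by
  have := (tendsto_nat_ceil_mul_div_atTop hu).comp (tendsto_natCast_atTop_atTop (R := ℝ))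
  refine this.congr fun n => ?_
  simp [mul_comm]

lemma tendsto_ceil_atTop {u : ℝ} (hu : 0 < u) :
    Tendsto (fun n : ℕ => ⌈(n : ℝ) * u⌉₊) atTop atTop :=
  tendsto_nat_ceil_atTop.comp ((tendsto_natCast_atTop_atTop (R := ℝ)).atTop_mul_const hu)

lemma PiecewiseLipschitzOn01.ae_continuousAt {f : ℝ → ℝ} (hf : PiecewiseLipschitzOn01 f) :
    ∀ᵐ u ∂(volume.restrict (Set.Ioc (0 : ℝ) 1)), ContinuousAt f u := by
  obtain ⟨p, I, C, hI, -, hU, hL⟩ := hf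
  have h0 : ∀ l, ∀ᵐ u ∂(volume.restrict (Set.Ioc (0 : ℝ) 1)), u ∉ frontier (I l) := by
    intro l
    refine ae_restrict_of_ae (measure_eq_zero_iff_ae_notMem.1 ?_)
    exact Convex.addHaar_frontier volume (convex_iff_ordConnected.2 (hI l))
  filter_upwards [ae_restrict_mem measurableSet_Ioc, ae_all_iff.2 h0] with u hu hfr
  rw [← hU] at hu
  obtain ⟨l, hl⟩ := Set.mem_iUnion.1 hu
  have : I l ∈ nhds u := by
    rw [← mem_interior_iff_mem_nhds]
    by_contra hcon
    exact hfr l ⟨subset_closure hl, hcon⟩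
  exact (hL l).continuousOn.continuousAt this

/-- Continuous mapping for convergence in measure to a constant. -/
lemma tendstoInMeasure_map_const {Ω E F : Type*} [MeasurableSpace Ω] {μ : Measure Ω}
    [PseudoMetricSpace E] [PseudoMetricSpace F] {X : ℕ → Ω → E} {x : E} (f : E → F)
    (hX : TendstoInMeasure μ X atTop (fun _ => x)) (hf : ContinuousAt f x) :
    TendstoInMeasure μ (fun n ω => f (X n ω)) atTop (fun _ => f x) := by
  rw [tendstoInMeasure_iff_dist] at *
  intro e he
  obtain ⟨d, hd, h⟩ := Metric.continuousAt_iff.1 hf e he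
  refine tendsto_of_tendsto_of_tendsto_of_le_of_le tendsto_const_nhds (hX d hd)
    (fun _ => zero_le) fun n => measure_mono fun ω hω => ?_
  simp only [Set.mem_ofPred_eq] at *
  by_contra hcon
  exact absurd (h (not_le.1 hcon)) (not_lt.2 hω)

lemma tendstoInMeasure_prod_const {Ω : Type*} [MeasurableSpace Ω] {μ : Measure Ω}
    {X Y : ℕ → Ω → ℝ} {x y : ℝ} (hX : TendstoInMeasure μ X atTop (fun _ => x))
    (hY : TendstoInMeasure μ Y atTop (fun _ => y)) :
    TendstoInMeasure μ (fun n ω => (X n ω, Y n ω)) atTop (fun _ => (x, y)) := by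
  rw [tendstoInMeasure_iff_dist] at *
  intro e he
  have := (hX e he).add (hY e he)
  rw [add_zero] at this
  refine tendsto_of_tendsto_of_tendsto_of_le_of_le tendsto_const_nhds this
    (fun _ => zero_le) fun n => (measure_mono fun ω hω => ?_).trans (measure_union_le _ _)
  simpa [Prod.dist_eq] using hω

lemma tendstoInMeasure_of_tendsto_integral_abs {Ω : Type*} [MeasurableSpace Ω] {μ : Measure Ω}
    [IsFiniteMeasure μ] {X : ℕ → Ω → ℝ} {x : ℝ} (hint : ∀ n, Integrable (X n) μ)
    (h : Tendsto (fun n => ∫ ω, |X n ω - x| ∂μ) atTop (nhds 0)) :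
    TendstoInMeasure μ X atTop (fun _ => x) := by
  rw [tendstoInMeasure_iff_measureReal_dist]
  intro e he
  have h2 := h.const_mul e⁻¹
  rw [mul_zero] at h2
  refine squeeze_zero (fun _ => measureReal_nonneg) (fun n => ?_) h2
  have := mul_meas_ge_le_integral_of_nonneg (μ := μ) (f := fun ω => |X n ω - x|)
    (Eventually.of_forall fun ω => abs_nonneg _) ((hint n).sub (integrable_const x)).abs e
  rw [inv_mul_eq_div, le_div_iff₀ he, mul_comm]
  exact this

lemma tendstoInMeasure_const_seq {Ω : Type*} [MeasurableSpace Ω] {μ : Measure Ω}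
    [IsFiniteMeasure μ] {z : ℕ → ℝ} {x : ℝ} (h : Tendsto z atTop (nhds x)) :
    TendstoInMeasure μ (fun n (_ : Ω) => z n) atTop (fun _ => x) :=
  tendstoInMeasure_of_tendsto_ae (fun _ => aestronglyMeasurable_const)
    (Eventually.of_forall fun _ => h)

/-- Covariance of a bounded variable and an event under an `α`-mixing bound. -/
lemma abs_setIntegral_sub_le_of_mixing {Ω : Type*} {F m0 : MeasurableSpace Ω} (μ : Measure Ω)
    [IsProbabilityMeasure μ] (hF : F ≤ m0) {α A : ℝ} (hA : 0 ≤ A)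
    {X : Ω → ℝ} (hX : Measurable[F] X) (hX0 : ∀ ω, 0 ≤ X ω) (hXA : ∀ ω, X ω ≤ A)
    {S : Set Ω}
    (hα : ∀ T, MeasurableSet[F] T → |μ.real (T ∩ S) - μ.real T * μ.real S| ≤ α) :
    |∫ ω in S, X ω ∂μ - (∫ ω, X ω ∂μ) * μ.real S| ≤ A * α := by
  have hXm : Measurable X := hX.mono hF le_rfl
  have hXi : Integrable X μ := Integrable.of_bound hXm.aestronglyMeasurable A
    (Eventually.of_forall fun ω => by rw [Real.norm_eq_abs, abs_of_nonneg (hX0 ω)]; exact hXA ω)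
  have hanti : ∀ ρ : Measure Ω, IsFiniteMeasure ρ →
      IntegrableOn (fun t => ρ.real {a | t ≤ X a}) (Set.Ioc 0 A) := by
    intro ρ hρ
    refine AntitoneOn.integrableOn_isCompact (s := Set.Icc 0 A) isCompact_Icc ?_ |>.mono_set
      Set.Ioc_subset_Icc_self
    intro s _ t _ hst
    exact measureReal_mono fun a (ha : t ≤ X a) => hst.trans ha
  rw [hXi.integrableOn.integral_eq_integral_Ioc_meas_le (Eventually.of_forall hX0)
    (Eventually.of_forall hXA), hXi.integral_eq_integral_Ioc_meas_le (Eventually.of_forall hX0)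
    (Eventually.of_forall hXA), ← integral_mul_const, ← integral_sub (hanti _ inferInstance)
    ((hanti _ inferInstance).mul_const _)]
  have := norm_setIntegral_le_of_norm_le_const (μ := volume) (s := Set.Ioc 0 A) (C := α)
    (f := fun t => (μ.restrict S).real {a | t ≤ X a} - μ.real {a | t ≤ X a} * μ.real S)
    (by simp) (fun t _ => by
      have hT : MeasurableSet[F] {a | t ≤ X a} := hX measurableSet_Ici
      rw [measureReal_restrict_apply (hF _ hT)]
      exact hα _ hT)
  rw [Real.norm_eq_abs] at this
  refine this.trans_eq ?_
  simp [Measure.real, hA, mul_comm]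

/-- Covariance of two bounded variables under an `α`-mixing bound. -/
lemma abs_cov_le_of_mixing {Ω : Type*} {F G m0 : MeasurableSpace Ω} (μ : Measure Ω)
    [IsProbabilityMeasure μ] (hF : F ≤ m0) (hG : G ≤ m0) {α A : ℝ}
    (hA : 0 ≤ A) {X Y : Ω → ℝ} (hX : Measurable[F] X) (hX0 : ∀ ω, 0 ≤ X ω) (hXA : ∀ ω, X ω ≤ A)
    (hY : Measurable[G] Y) (hY0 : ∀ ω, 0 ≤ Y ω) (hYA : ∀ ω, Y ω ≤ A)
    (hα : ∀ T S, MeasurableSet[F] T → MeasurableSet[G] S →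
      |μ.real (T ∩ S) - μ.real T * μ.real S| ≤ α) :
    |∫ ω, X ω * Y ω ∂μ - (∫ ω, X ω ∂μ) * ∫ ω, Y ω ∂μ| ≤ A ^ 2 * α := by
  have hXm : Measurable X := hX.mono hF le_rfl
  have hYm : Measurable Y := hY.mono hG le_rfl
  have hXi : Integrable X μ := Integrable.of_bound hXm.aestronglyMeasurable A
    (Eventually.of_forall fun ω => by rw [Real.norm_eq_abs, abs_of_nonneg (hX0 ω)]; exact hXA ω)
  set ρ : Measure Ω := μ.withDensity (fun ω => ENNReal.ofReal (X ω)) with hρ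
  have hρfin : IsFiniteMeasure ρ := isFiniteMeasure_withDensity_ofReal hXi.2
  have hint : ∀ κ : Measure Ω, IsFiniteMeasure κ → Integrable Y κ := fun κ _ =>
    Integrable.of_bound hYm.aestronglyMeasurable A
    (Eventually.of_forall fun ω => by rw [Real.norm_eq_abs, abs_of_nonneg (hY0 ω)]; exact hYA ω)
  have hanti : ∀ κ : Measure Ω, IsFiniteMeasure κ →
      IntegrableOn (fun t => κ.real {a | t ≤ Y a}) (Set.Ioc 0 A) := by
    intro κ hκ
    refine AntitoneOn.integrableOn_isCompact (s := Set.Icc 0 A) isCompact_Icc ?_ |>.mono_set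
      Set.Ioc_subset_Icc_self
    intro s _ t _ hst
    exact measureReal_mono fun a (ha : t ≤ Y a) => hst.trans ha
  have h1 : ∫ ω, X ω * Y ω ∂μ = ∫ ω, Y ω ∂ρ := by
    rw [hρ, integral_withDensity_eq_integral_toReal_smul hXm.ennreal_ofReal
      (Eventually.of_forall fun _ => ENNReal.ofReal_lt_top)]
    simp [ENNReal.toReal_ofReal (hX0 _)]
  have h2 : ∀ S, MeasurableSet S → ρ.real S = ∫ ω in S, X ω ∂μ := by
    intro S hS
    rw [hρ, Measure.real, withDensity_apply _ hS,
      integral_eq_lintegral_of_nonneg_ae (Eventually.of_forall hX0) hXm.aestronglyMeasurable.restrict]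
  rw [h1, (hint ρ hρfin).integral_eq_integral_Ioc_meas_le (Eventually.of_forall hY0)
    (Eventually.of_forall hYA), (hint μ inferInstance).integral_eq_integral_Ioc_meas_le
    (Eventually.of_forall hY0) (Eventually.of_forall hYA), ← integral_const_mul,
    ← integral_sub (hanti _ hρfin) ((hanti _ inferInstance).const_mul _)]
  have := norm_setIntegral_le_of_norm_le_const (μ := volume) (s := Set.Ioc 0 A) (C := A * α)
    (f := fun t => ρ.real {a | t ≤ Y a} - (∫ ω, X ω ∂μ) * μ.real {a | t ≤ Y a})
    (by simp) (fun t _ => by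
      have hT : MeasurableSet[G] {a | t ≤ Y a} := hY measurableSet_Ici
      rw [h2 _ (hG _ hT)]
      exact abs_setIntegral_sub_le_of_mixing μ hF hA hX hX0 hXA fun T hT' => hα T _ hT' hT)
  rw [Real.norm_eq_abs] at this
  refine this.trans_eq ?_
  simp only [Measure.real, Real.volume_Ioc, sub_zero, ENNReal.toReal_ofReal hA]
  ring

section mixing

variable {Ω : Type*} {m0 : MeasurableSpace Ω}

lemma pastField_le {ε : ℕ → ℕ → Ω → ℝ} (hε : ∀ n t, Measurable (ε n t)) (n t : ℕ) :
    pastField ε n t ≤ m0 := iSup₂_le fun u _ => (hε n u).comap_le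

lemma futureField_le {ε : ℕ → ℕ → Ω → ℝ} (hε : ∀ n t, Measurable (ε n t)) (n t : ℕ) :
    futureField ε n t ≤ m0 := iSup₂_le fun u _ => (hε n u).comap_le

lemma measurable_pastField (ε : ℕ → ℕ → Ω → ℝ) {n u t : ℕ} (h : u ≤ t) :
    Measurable[pastField ε n t] (ε n u) :=
  measurable_iff_comap_le.2
    (le_iSup₂_of_le (f := fun u (_ : u ∈ {u : ℕ | u ≤ t}) =>
      MeasurableSpace.comap (ε n u) inferInstance) u h le_rfl)

lemma measurable_futureField (ε : ℕ → ℕ → Ω → ℝ) {n u t : ℕ} (h : t ≤ u) :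
    Measurable[futureField ε n t] (ε n u) :=
  measurable_iff_comap_le.2
    (le_iSup₂_of_le (f := fun u (_ : u ∈ {u : ℕ | t ≤ u}) =>
      MeasurableSpace.comap (ε n u) inferInstance) u h le_rfl)

lemma abs_measureReal_inter_sub_le_one (μ : Measure Ω) [IsProbabilityMeasure μ] (A B : Set Ω) :
    |μ.real (A ∩ B) - μ.real A * μ.real B| ≤ 1 := by
  have h1 : μ.real (A ∩ B) ≤ 1 := measureReal_le_one
  have h2 : μ.real A ≤ 1 := measureReal_le_one
  have h3 : μ.real B ≤ 1 := measureReal_le_one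
  have h4 : 0 ≤ μ.real (A ∩ B) := measureReal_nonneg
  have h5 : 0 ≤ μ.real A := measureReal_nonneg
  have h6 : 0 ≤ μ.real B := measureReal_nonneg
  rw [abs_le]
  constructor <;> nlinarith

lemma alphaMix_nonneg (μ : Measure Ω) (ε : ℕ → ℕ → Ω → ℝ) (h : ℕ) : 0 ≤ alphaMix μ ε h := by
  refine Real.iSup_nonneg fun n => Real.iSup_nonneg fun t => Real.sSup_nonneg ?_
  rintro x ⟨A, B, -, -, rfl⟩
  exact abs_nonneg _

lemma alphaMix_le_one (μ : Measure Ω) [IsProbabilityMeasure μ] (ε : ℕ → ℕ → Ω → ℝ) (h : ℕ) :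
    alphaMix μ ε h ≤ 1 := by
  refine Real.iSup_le (fun n => Real.iSup_le (fun t => Real.sSup_le ?_ zero_le_one) zero_le_one)
    zero_le_one
  rintro x ⟨A, B, -, -, rfl⟩
  exact abs_measureReal_inter_sub_le_one μ A B

lemma abs_measureReal_inter_sub_le_alphaMix (μ : Measure Ω) [IsProbabilityMeasure μ]
    (ε : ℕ → ℕ → Ω → ℝ) (n t h : ℕ) {A B : Set Ω} (hA : MeasurableSet[pastField ε n t] A)
    (hB : MeasurableSet[futureField ε n (t + h)] B) :
    |μ.real (A ∩ B) - μ.real A * μ.real B| ≤ alphaMix μ ε h := by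
  have hb : ∀ n t, ∀ x ∈ {x : ℝ | ∃ A B : Set Ω,
      MeasurableSet[pastField ε n t] A ∧ MeasurableSet[futureField ε n (t + h)] B ∧
      x = |(μ (A ∩ B)).toReal - (μ A).toReal * (μ B).toReal|}, x ≤ 1 := by
    rintro n t x ⟨A, B, -, -, rfl⟩
    exact abs_measureReal_inter_sub_le_one μ A B
  refine le_trans (le_csSup ⟨1, hb n t⟩ ⟨A, B, hA, hB, rfl⟩) ?_
  refine le_trans (le_ciSup (f := fun t => sSup {x : ℝ | ∃ A B : Set Ω,
      MeasurableSet[pastField ε n t] A ∧ MeasurableSet[futureField ε n (t + h)] B ∧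
      x = |(μ (A ∩ B)).toReal - (μ A).toReal * (μ B).toReal|}) ⟨1, ?_⟩ t) ?_
  · rintro _ ⟨t, rfl⟩
    exact Real.sSup_le (hb n t) zero_le_one
  · refine le_ciSup (f := fun n => ⨆ t : ℕ, sSup {x : ℝ | ∃ A B : Set Ω,
      MeasurableSet[pastField ε n t] A ∧ MeasurableSet[futureField ε n (t + h)] B ∧
      x = |(μ (A ∩ B)).toReal - (μ A).toReal * (μ B).toReal|}) ⟨1, ?_⟩ n
    rintro _ ⟨n, rfl⟩
    exact Real.iSup_le (fun t => Real.sSup_le (hb n t) zero_le_one) zero_le_one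

lemma summable_alphaMix (μ : Measure Ω) [IsProbabilityMeasure μ] (ε : ℕ → ℕ → Ω → ℝ) {μ2 : ℝ}
    (hμ2 : 1 ≤ μ2) (hmix : Summable (fun h : ℕ => alphaMix μ ε h ^ (1 - 1 / (2 * μ2)))) :
    Summable (alphaMix μ ε) := by
  refine Summable.of_nonneg_of_le (fun h => alphaMix_nonneg μ ε h) (fun h => ?_) hmix
  have h1 : 0 < 1 / (2 * μ2) := by positivity
  have h2 : 1 / (2 * μ2) < 1 := by rw [div_lt_one (by positivity)]; linarith
  conv_lhs => rw [← Real.rpow_one (alphaMix μ ε h)]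
  exact Real.rpow_le_rpow_of_exponent_ge_of_imp (alphaMix_nonneg μ ε h) (alphaMix_le_one μ ε h)
    (by linarith) (fun _ h => by linarith)

end mixing

lemma sum_dist_le_two_mul_tsum {β : ℕ → ℝ} (hβ0 : ∀ d, 0 ≤ β d) (hβ : Summable β) (s : Finset ℕ)
    (j : ℕ) : ∑ k ∈ s, (if j ≤ k then β (k - j) else β (j - k)) ≤ 2 * ∑' d, β d := by
  rw [Finset.sum_ite, two_mul]
  refine add_le_add ?_ ?_
  · rw [← Finset.sum_image (f := β) (g := fun k => k - j)]
    · exact hβ.sum_le_tsum _ fun d _ => hβ0 d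
    · intro a ha b hb hab
      simp only [Finset.coe_filter, Set.mem_ofPred_eq] at ha hb hab
      omega
  · rw [← Finset.sum_image (f := β) (g := fun k => j - k)]
    · exact hβ.sum_le_tsum _ fun d _ => hβ0 d
    · intro a ha b hb hab
      simp only [Finset.coe_filter, Set.mem_ofPred_eq] at ha hb hab
      omega

lemma integral_abs_le_sqrt {Ω : Type*} [MeasurableSpace Ω] (μ : Measure Ω)
    [IsProbabilityMeasure μ] {X : Ω → ℝ} (hX : MemLp X 2 μ) {V : ℝ}
    (hV : ∫ ω, X ω ^ 2 ∂μ ≤ V) : ∫ ω, |X ω| ∂μ ≤ √V := by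
  refine Real.le_sqrt_of_sq_le ?_
  have h1 := variance_nonneg |X| μ
  rw [variance_eq_sub hX.abs] at h1
  have h2 : ∫ ω, (|X| ^ 2) ω ∂μ = ∫ ω, X ω ^ 2 ∂μ := by simp
  have h3 : ∫ ω, |X| ω ∂μ = ∫ ω, |X ω| ∂μ := rfl
  rw [h2, h3] at h1
  linarith

section weighted

variable {Ω : Type*} {m0 : MeasurableSpace Ω}

/-- Mixing bound at lag `d` for variables depending on a window of length `h`. -/
noncomputable def windowMix (μ : Measure Ω) (ε : ℕ → ℕ → Ω → ℝ) (h d : ℕ) : ℝ :=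
  if d < h then 1 else alphaMix μ ε (d - h)

lemma windowMix_nonneg (μ : Measure Ω) (ε : ℕ → ℕ → Ω → ℝ) (h d : ℕ) :
    0 ≤ windowMix μ ε h d := by
  unfold windowMix
  split_ifs
  · exact zero_le_one
  · exact alphaMix_nonneg _ _ _

lemma summable_windowMix {μ : Measure Ω} {ε : ℕ → ℕ → Ω → ℝ} (hs : Summable (alphaMix μ ε))
    (h : ℕ) : Summable (windowMix μ ε h) := by
  rw [← summable_nat_add_iff h]
  simpa [windowMix] using hs

/-- Weighted sums of bounded windowed functionals of a mixing array concentrate in `L¹`. -/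
lemma integral_abs_weighted_sum_le (μ : Measure Ω) [IsProbabilityMeasure μ]
    {ε : ℕ → ℕ → Ω → ℝ} (hε : ∀ n t, Measurable (ε n t)) (hs : Summable (alphaMix μ ε))
    (n h : ℕ) {A W : ℝ} (hA : 0 ≤ A) (Z : ℕ → Ω → ℝ) (s : Finset ℕ)
    (hZ0 : ∀ j ω, 0 ≤ Z j ω) (hZA : ∀ j ω, Z j ω ≤ A)
    (hZp : ∀ j, Measurable[pastField ε n j] (Z j))
    (hZf : ∀ j, Measurable[futureField ε n (j - h)] (Z j))
    (w : ℕ → ℝ) (hw0 : ∀ j ∈ s, 0 ≤ w j) (hwW : ∀ j ∈ s, w j ≤ W) :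
    ∫ ω, |∑ j ∈ s, w j * (Z j ω - ∫ ω', Z j ω' ∂μ)| ∂μ ≤
      √(A ^ 2 * (2 * ∑' d, windowMix μ ε h d) * W * ∑ j ∈ s, w j) := by
  have hZm : ∀ j, Measurable (Z j) := fun j => (hZp j).mono (pastField_le hε n j) le_rfl
  have hZ2' : ∀ j, MemLp (Z j) 2 μ := fun j =>
    MemLp.of_bound (hZm j).aestronglyMeasurable A (Eventually.of_forall fun ω => by
      rw [Real.norm_eq_abs, abs_of_nonneg (hZ0 j ω)]; exact hZA j ω)
  have hZ2 : ∀ j, MemLp (fun ω => Z j ω - ∫ ω', Z j ω' ∂μ) 2 μ := fun j =>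
    (hZ2' j).sub (memLp_const _)
  have hcov_le : ∀ j k, j ≤ k →
      ∫ ω, Z j ω * Z k ω ∂μ - (∫ ω, Z j ω ∂μ) * ∫ ω, Z k ω ∂μ
        ≤ A ^ 2 * windowMix μ ε h (k - j) := by
    intro j k hjk
    refine (le_abs_self _).trans ?_
    unfold windowMix
    split_ifs with hd
    · exact abs_cov_le_of_mixing (F := m0) (G := m0) μ le_rfl le_rfl hA (hZm j) (hZ0 j) (hZA j)
        (hZm k) (hZ0 k) (hZA k) fun T S _ _ => abs_measureReal_inter_sub_le_one μ T S
    · refine abs_cov_le_of_mixing μ (pastField_le hε n j) (futureField_le hε n (k - h)) hA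
        (hZp j) (hZ0 j) (hZA j) (hZf k) (hZ0 k) (hZA k) fun T S hT hS => ?_
      refine abs_measureReal_inter_sub_le_alphaMix μ ε n j (k - j - h) hT ?_
      rwa [show j + (k - j - h) = k - h by omega]
  have hprod : ∀ j k, ∫ ω, (Z j ω - ∫ ω', Z j ω' ∂μ) * (Z k ω - ∫ ω', Z k ω' ∂μ) ∂μ
      = ∫ ω, Z j ω * Z k ω ∂μ - (∫ ω, Z j ω ∂μ) * ∫ ω, Z k ω ∂μ := by
    intro j k
    exact covariance_eq_sub (hZ2' j) (hZ2' k)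
  refine integral_abs_le_sqrt μ (memLp_finsetSum _ fun j _ => (hZ2 j).const_mul (w j)) ?_
  have hexp : ∀ ω, (∑ j ∈ s, w j * (Z j ω - ∫ ω', Z j ω' ∂μ)) ^ 2 =
      ∑ j ∈ s, ∑ k ∈ s, w j * w k *
        ((Z j ω - ∫ ω', Z j ω' ∂μ) * (Z k ω - ∫ ω', Z k ω' ∂μ)) := by
    intro ω
    rw [sq, Finset.sum_mul_sum]
    refine Finset.sum_congr rfl fun j _ => Finset.sum_congr rfl fun k _ => ?_
    ring
  simp_rw [hexp]
  have hint : ∀ j k, Integrable (fun ω => w j * w k *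
      ((Z j ω - ∫ ω', Z j ω' ∂μ) * (Z k ω - ∫ ω', Z k ω' ∂μ))) μ := fun j k =>
    ((hZ2 j).integrable_mul (hZ2 k)).const_mul _
  rw [integral_finsetSum _ fun j _ => integrable_finsetSum _ fun k _ => hint j k]
  have hterm : ∀ j ∈ s, ∫ ω, ∑ k ∈ s, w j * w k *
      ((Z j ω - ∫ ω', Z j ω' ∂μ) * (Z k ω - ∫ ω', Z k ω' ∂μ)) ∂μ ≤
      w j * (W * A ^ 2 * (2 * ∑' d, windowMix μ ε h d)) := by
    intro j hj
    rw [integral_finsetSum _ fun k _ => hint j k]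
    have hb := sum_dist_le_two_mul_tsum (windowMix_nonneg μ ε h) (summable_windowMix hs h) s j
    have hW : 0 ≤ W := (hw0 j hj).trans (hwW j hj)
    calc _ ≤ ∑ k ∈ s, w j * (W * A ^ 2 *
          (if j ≤ k then windowMix μ ε h (k - j) else windowMix μ ε h (j - k))) := by
          refine Finset.sum_le_sum fun k hk => ?_
          rw [integral_const_mul, hprod, mul_assoc]
          refine mul_le_mul_of_nonneg_left ?_ (hw0 j hj)
          rw [mul_assoc]
          have h1 : ∫ ω, Z j ω * Z k ω ∂μ - (∫ ω, Z j ω ∂μ) * ∫ ω, Z k ω ∂μ ≤ A ^ 2 *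
            (if j ≤ k then windowMix μ ε h (k - j) else windowMix μ ε h (j - k)) := by
            split_ifs with hjk
            · exact hcov_le j k hjk
            · have := hcov_le k j (by omega)
              simp_rw [mul_comm (Z k _)] at this
              rwa [mul_comm (∫ ω, Z k ω ∂μ)] at this
          have h2 : 0 ≤ A ^ 2 *
            (if j ≤ k then windowMix μ ε h (k - j) else windowMix μ ε h (j - k)) := by
            refine mul_nonneg (sq_nonneg _) ?_
            split_ifs <;> exact windowMix_nonneg _ _ _ _
          exact (mul_le_mul_of_nonneg_left h1 (hw0 k hk)).trans
            (mul_le_mul_of_nonneg_right (hwW k hk) h2)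
      _ = w j * (W * A ^ 2 * ∑ k ∈ s,
          (if j ≤ k then windowMix μ ε h (k - j) else windowMix μ ε h (j - k))) := by
          rw [Finset.mul_sum, Finset.mul_sum]
      _ ≤ _ := by
          refine mul_le_mul_of_nonneg_left ?_ (hw0 j hj)
          exact mul_le_mul_of_nonneg_left hb (by positivity)
  refine (Finset.sum_le_sum hterm).trans_eq ?_
  rw [← Finset.sum_mul]
  ring

end weighted

lemma exists_Icc_kernel_lower {K : ℝ → ℝ} (hK_cont : Continuous K) (hK_nonneg : ∀ z, 0 ≤ K z)
    (hK_int : ∫ z : ℝ, K z = 1) :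
    ∃ p q κ : ℝ, p < q ∧ 0 < κ ∧ (0 : ℝ) ∉ Set.Icc p q ∧ ∀ z ∈ Set.Icc p q, κ ≤ K z := by
  obtain ⟨z0, hz0⟩ : ∃ z0, K z0 ≠ 0 := by
    by_contra! hcon
    simp [hcon] at hK_int
  have hpos : 0 < K z0 := lt_of_le_of_ne (hK_nonneg z0) hz0.symm
  obtain ⟨r, hr, hball⟩ := Metric.isOpen_iff.1
    (isOpen_lt continuous_const hK_cont : IsOpen {z | K z0 / 2 < K z}) z0 (half_lt_self hpos)
  have hmem : ∀ z, |z - z0| < r → K z0 / 2 ≤ K z := fun z hz =>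
    (hball (by rwa [Metric.mem_ball, Real.dist_eq]) : K z0 / 2 < K z).le
  rcases le_or_gt 0 z0 with h | h
  · refine ⟨z0 + r / 4, z0 + r / 2, K z0 / 2, by linarith, by linarith, ?_, ?_⟩
    · intro h0; linarith [h0.1]
    · intro z hz
      exact hmem z (by rw [abs_lt]; constructor <;> linarith [hz.1, hz.2])
  · refine ⟨z0 - r / 2, z0 - r / 4, K z0 / 2, by linarith, by linarith, ?_, ?_⟩
    · intro h0; linarith [h0.2]
    · intro z hz
      exact hmem z (by rw [abs_lt]; constructor <;> linarith [hz.1, hz.2])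

lemma Kw_nonneg {K : ℝ → ℝ} (hK_nonneg : ∀ z, 0 ≤ K z) (b : ℕ → ℝ) (n t i : ℕ) :
    0 ≤ Kw K b n t i := by
  unfold Kw
  split_ifs
  · exact le_rfl
  · exact hK_nonneg _

lemma wgt_nonneg {K : ℝ → ℝ} (hK_nonneg : ∀ z, 0 ≤ K z) (b : ℕ → ℝ) (n t i : ℕ) :
    0 ≤ wgt K b n t i :=
  div_nonneg (Kw_nonneg hK_nonneg b n t i)
    (Finset.sum_nonneg fun _ _ => Kw_nonneg hK_nonneg b n t _)

lemma le_sum_Kw {K : ℝ → ℝ} (hK_nonneg : ∀ z, 0 ≤ K z) (b : ℕ → ℝ) {p q κ : ℝ} (hκ : 0 < κ)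
    (h0 : (0 : ℝ) ∉ Set.Icc p q) (hK : ∀ z ∈ Set.Icc p q, κ ≤ K z) {n t : ℕ}
    (hN : 0 < (n : ℝ) * b n) (hlo : 0 < (t : ℝ) - q * (n * b n))
    (hhi : (t : ℝ) - p * (n * b n) ≤ n) :
    κ * ((q - p) * (n * b n) - 1) ≤ ∑ i ∈ Finset.Icc 1 n, Kw K b n t i := by
  set N : ℝ := n * b n with hNdef
  set s := Finset.Icc ⌈(t : ℝ) - q * N⌉₊ ⌊(t : ℝ) - p * N⌋₊ with hs
  rcases lt_or_ge ((q - p) * N) 1 with hsmall | hbig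
  · refine le_trans ?_ (Finset.sum_nonneg fun _ _ => Kw_nonneg hK_nonneg b n t _)
    nlinarith
  have hhi0 : 0 ≤ (t : ℝ) - p * N := by nlinarith
  have hsub : s ⊆ Finset.Icc 1 n := by
    intro i hi
    rw [hs, Finset.mem_Icc] at hi
    rw [Finset.mem_Icc]
    exact ⟨(Nat.one_le_ceil_iff.2 hlo).trans hi.1, hi.2.trans (Nat.floor_le_of_le hhi)⟩
  have hterm : ∀ i ∈ s, κ ≤ Kw K b n t i := by
    intro i hi
    rw [hs, Finset.mem_Icc, Nat.ceil_le, Nat.le_floor_iff hhi0] at hi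
    have hmem : ((t : ℝ) - i) / N ∈ Set.Icc p q := by
      rw [Set.mem_Icc, le_div_iff₀ hN, div_le_iff₀ hN]
      constructor <;> linarith [hi.1, hi.2]
    unfold Kw
    split_ifs with hti
    · subst hti
      simp at hmem
      exact absurd hmem h0
    · exact hK _ hmem
  have hcard : (q - p) * N - 1 ≤ (s.card : ℝ) := by
    rw [hs, Nat.card_Icc]
    have h1 : (⌊(t : ℝ) - p * N⌋₊ : ℝ) + 1 ≤
        ((⌊(t : ℝ) - p * N⌋₊ + 1 - ⌈(t : ℝ) - q * N⌉₊ : ℕ) : ℝ) + ⌈(t : ℝ) - q * N⌉₊ := by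
      exact_mod_cast (by omega)
    have h2 := Nat.lt_floor_add_one ((t : ℝ) - p * N)
    have h3 := Nat.ceil_lt_add_one hlo.le
    linarith
  calc κ * ((q - p) * N - 1) ≤ s.card * κ := by nlinarith
    _ ≤ ∑ i ∈ s, Kw K b n t i := by
        rw [← nsmul_eq_mul]; exact Finset.card_nsmul_le_sum _ _ _ hterm
    _ ≤ _ := Finset.sum_le_sum_of_subset_of_nonneg hsub fun _ _ _ => Kw_nonneg hK_nonneg b n t _

lemma tendsto_bandwidth {b : ℕ → ℝ} (hb_pos : ∀ n, 0 < b n) (hb0 : Tendsto b atTop (nhds 0))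
    (hnb : Tendsto (fun n : ℕ => 1 / ((n : ℝ) * (b n) ^ 2)) atTop (nhds 0)) :
    Tendsto (fun n : ℕ => (n : ℝ) * b n) atTop atTop := by
  have h1 : Tendsto (fun n : ℕ => ((n : ℝ) * b n)⁻¹) atTop (nhds 0) := by
    have := hnb.mul hb0
    rw [zero_mul] at this
    refine this.congr' ?_
    filter_upwards [eventually_gt_atTop 0] with n hn
    have hn' : (0 : ℝ) < n := by exact_mod_cast hn
    have := hb_pos n
    field_simp
  have h2 : Tendsto (fun n : ℕ => ((n : ℝ) * b n)⁻¹) atTop (nhdsWithin 0 (Set.Ioi 0)) := by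
    refine tendsto_nhdsWithin_iff.2 ⟨h1, ?_⟩
    filter_upwards [eventually_gt_atTop 0] with n hn
    have hn' : (0 : ℝ) < n := by exact_mod_cast hn
    exact inv_pos.2 (mul_pos hn' (hb_pos n))
  exact h2.inv_tendsto_nhdsGT_zero.congr fun n => by simp only [Pi.inv_apply, inv_inv]

/-- At interior design points the kernel weights sum to one and are `O(1/(nb))`. -/
lemma eventually_wgt_bounds {K : ℝ → ℝ} {R : ℝ} {b : ℕ → ℝ} (hK_cont : Continuous K)
    (hK_nonneg : ∀ z, 0 ≤ K z) (hK_le : ∀ z, K z ≤ R) (hK_int : ∫ z : ℝ, K z = 1)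
    (hb0 : Tendsto b atTop (nhds 0))
    (hN : Tendsto (fun n : ℕ => (n : ℝ) * b n) atTop atTop) {u : ℝ} (hu : u ∈ Set.Ioo (0 : ℝ) 1) :
    ∃ C : ℝ, ∀ᶠ n : ℕ in atTop,
      ∑ j ∈ Finset.Icc 1 n, wgt K b n ⌈(n : ℝ) * u⌉₊ j = 1 ∧
      ∀ j, wgt K b n ⌈(n : ℝ) * u⌉₊ j ≤ C / (n * b n) := by
  obtain ⟨p, q, κ, hpq, hκ, h0, hK⟩ := exists_Icc_kernel_lower hK_cont hK_nonneg hK_int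
  have hR : 0 ≤ R := (hK_nonneg 0).trans (hK_le 0)
  refine ⟨R / (κ * (q - p) / 2), ?_⟩
  have hlim : ∀ z : ℝ, Tendsto (fun n : ℕ => (⌈(n : ℝ) * u⌉₊ : ℝ) / n - z * b n) atTop
      (nhds u) := by
    intro z
    have := (tendsto_ceil_div hu.1.le).sub (hb0.const_mul z)
    simpa using this
  filter_upwards [(hlim q).eventually (lt_mem_nhds hu.1), (hlim p).eventually (gt_mem_nhds hu.2),
    hN.eventually_ge_atTop (2 / (q - p)), hN.eventually_gt_atTop 0, eventually_gt_atTop 0]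
    with n h1 h2 h3 h4 hn
  have hn' : (0 : ℝ) < n := by exact_mod_cast hn
  have hqp : 0 < q - p := sub_pos.2 hpq
  rw [div_le_iff₀ hqp] at h3
  have hlo : 0 < (⌈(n : ℝ) * u⌉₊ : ℝ) - q * (n * b n) := by
    have := mul_pos hn' h1
    rw [mul_sub, mul_div_cancel₀ _ hn'.ne'] at this
    linarith
  have hhi : (⌈(n : ℝ) * u⌉₊ : ℝ) - p * (n * b n) ≤ n := by
    have := mul_lt_mul_of_pos_left h2 hn'
    rw [mul_sub, mul_div_cancel₀ _ hn'.ne'] at this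
    linarith
  have hS := le_sum_Kw hK_nonneg b hκ h0 hK h4 hlo hhi
  have hS2 : κ * (q - p) / 2 * (n * b n) ≤ ∑ i ∈ Finset.Icc 1 n, Kw K b n ⌈(n : ℝ) * u⌉₊ i := by
    refine le_trans ?_ hS
    nlinarith
  have hpos : 0 < κ * (q - p) / 2 * (n * b n) := by positivity
  constructor
  · unfold wgt
    rw [← Finset.sum_div, div_self (hpos.trans_le hS2).ne']
  · intro j
    unfold wgt
    rw [div_div]
    refine div_le_div₀ hR ?_ hpos hS2
    unfold Kw
    split_ifs
    · exact hR
    · exact hK_le _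

/-- The kernel weights concentrate near the design point. -/
lemma eventually_wgt_eq_zero {K : ℝ → ℝ} {b : ℕ → ℝ} (hK_supp : HasCompactSupport K)
    (hb_pos : ∀ n, 0 < b n) (hb0 : Tendsto b atTop (nhds 0)) {u : ℝ} (hu : 0 ≤ u) {δ : ℝ}
    (hδ : 0 < δ) : ∀ᶠ n : ℕ in atTop, ∀ j : ℕ, δ ≤ |(j : ℝ) / n - u| →
      wgt K b n ⌈(n : ℝ) * u⌉₊ j = 0 := by
  obtain ⟨L, hL⟩ := hK_supp.isCompact.isBounded.exists_norm_le
  have hlim : Tendsto (fun n : ℕ => L * b n + |(⌈(n : ℝ) * u⌉₊ : ℝ) / n - u|) atTop (nhds 0) := by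
    have := (hb0.const_mul L).add ((tendsto_ceil_div hu).sub_const u).abs
    simpa using this
  filter_upwards [hlim.eventually (gt_mem_nhds hδ), eventually_gt_atTop 0] with n h1 hn j hj
  have hn' : (0 : ℝ) < n := by exact_mod_cast hn
  unfold wgt Kw
  split_ifs with h
  · simp
  · rw [div_eq_zero_iff]
    left
    by_contra hK
    have := hL _ (subset_tsupport K hK)
    rw [Real.norm_eq_abs, abs_div, abs_of_pos (mul_pos hn' (hb_pos n)),
      div_le_iff₀ (mul_pos hn' (hb_pos n))] at this
    have h2 : |(⌈(n : ℝ) * u⌉₊ : ℝ) / n - j / n| ≤ L * b n := by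
      rw [← sub_div, abs_div, abs_of_pos hn', div_le_iff₀ hn']
      linarith
    have h3 := abs_sub_le ((j : ℝ) / n) ((⌈(n : ℝ) * u⌉₊ : ℝ) / n) u
    rw [abs_sub_comm ((j : ℝ) / n) ((⌈(n : ℝ) * u⌉₊ : ℝ) / n)] at h3
    linarith

section indicators

variable {Ω : Type*}

lemma aproc_eq_zero_or_one (v : ℝ → ℝ) (ε : ℕ → ℕ → Ω → ℝ) (n t : ℕ) (ω : Ω) :
    aproc v ε n t ω = 0 ∨ aproc v ε n t ω = 1 := by
  unfold aproc
  split_ifs <;> simp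

lemma aproc_nonneg (v : ℝ → ℝ) (ε : ℕ → ℕ → Ω → ℝ) (n t : ℕ) (ω : Ω) :
    0 ≤ aproc v ε n t ω := by
  rcases aproc_eq_zero_or_one v ε n t ω with h | h <;> simp [h]

lemma aproc_le_one (v : ℝ → ℝ) (ε : ℕ → ℕ → Ω → ℝ) (n t : ℕ) (ω : Ω) :
    aproc v ε n t ω ≤ 1 := by
  rcases aproc_eq_zero_or_one v ε n t ω with h | h <;> simp [h]

lemma aproc_mul_nonneg (v : ℝ → ℝ) (ε : ℕ → ℕ → Ω → ℝ) (n t s : ℕ) (ω : Ω) :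
    0 ≤ aproc v ε n t ω * aproc v ε n s ω :=
  mul_nonneg (aproc_nonneg _ _ _ _ _) (aproc_nonneg _ _ _ _ _)

lemma aproc_mul_le (v : ℝ → ℝ) (ε : ℕ → ℕ → Ω → ℝ) (n t s : ℕ) (ω : Ω) :
    aproc v ε n t ω * aproc v ε n s ω ≤ aproc v ε n t ω :=
  mul_le_of_le_one_right (aproc_nonneg _ _ _ _ _) (aproc_le_one _ _ _ _ _)

lemma aproc_mul_self (v : ℝ → ℝ) (ε : ℕ → ℕ → Ω → ℝ) (n t : ℕ) (ω : Ω) :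
    aproc v ε n t ω * aproc v ε n t ω = aproc v ε n t ω := by
  rcases aproc_eq_zero_or_one v ε n t ω with h | h <;> simp [h]

lemma measurable_rproc {F : MeasurableSpace Ω} (v : ℝ → ℝ) {ε : ℕ → ℕ → Ω → ℝ} {n t : ℕ}
    (h : Measurable (ε n t)) : Measurable (rproc v ε n t) :=
  h.const_mul _

lemma measurable_aproc {F : MeasurableSpace Ω} (v : ℝ → ℝ) {ε : ℕ → ℕ → Ω → ℝ} {n t : ℕ}
    (h : Measurable (ε n t)) : Measurable (aproc v ε n t) :=
  Measurable.ite ((measurable_rproc v h) (measurableSet_singleton 0)).compl measurable_const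
    measurable_const

lemma integral_aproc_mul [MeasurableSpace Ω] (μ : Measure Ω) [IsFiniteMeasure μ] (v : ℝ → ℝ)
    {ε : ℕ → ℕ → Ω → ℝ} (hε : ∀ n t, Measurable (ε n t)) (n t s : ℕ) :
    ∫ ω, aproc v ε n t ω * aproc v ε n s ω ∂μ =
      μ.real {ω | aproc v ε n t ω * aproc v ε n s ω = 1} := by
  have hmeas : MeasurableSet {ω | aproc v ε n t ω * aproc v ε n s ω = 1} :=
    ((measurable_aproc v (hε n t)).mul (measurable_aproc v (hε n s))) (measurableSet_singleton 1)
  rw [← integral_indicator_one hmeas]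
  refine integral_congr_ae (Eventually.of_forall fun ω => ?_)
  simp only [Set.indicator, Set.mem_ofPred_eq, Pi.one_apply]
  rcases aproc_eq_zero_or_one v ε n t ω with h | h <;>
    rcases aproc_eq_zero_or_one v ε n s ω with h' | h' <;> simp [h, h']

lemma phat_eq_phat2 (v : ℝ → ℝ) (ε : ℕ → ℕ → Ω → ℝ) (K : ℝ → ℝ) (b : ℕ → ℝ) (n t : ℕ) (ω : Ω) :
    phat v ε K b n t ω = phat2 v ε K b n 0 t ω := by
  simp [phat, phat2, aproc_mul_self]

lemma phat2_nonneg (v : ℝ → ℝ) (ε : ℕ → ℕ → Ω → ℝ) {K : ℝ → ℝ} (hK : ∀ z, 0 ≤ K z) (b : ℕ → ℝ)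
    (n h t : ℕ) (ω : Ω) : 0 ≤ phat2 v ε K b n h t ω :=
  Finset.sum_nonneg fun _ _ => mul_nonneg (wgt_nonneg hK _ _ _ _) (aproc_mul_nonneg _ _ _ _ _ _)

lemma phat2_le_phat (v : ℝ → ℝ) (ε : ℕ → ℕ → Ω → ℝ) {K : ℝ → ℝ} (hK : ∀ z, 0 ≤ K z) (b : ℕ → ℝ)
    (n h t : ℕ) (ω : Ω) : phat2 v ε K b n h t ω ≤ phat v ε K b n t ω := by
  unfold phat2 phat
  calc _ ≤ ∑ j ∈ Finset.Icc (h + 1) n, wgt K b n t j * aproc v ε n j ω :=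
        Finset.sum_le_sum fun j _ =>
          mul_le_mul_of_nonneg_left (aproc_mul_le _ _ _ _ _ _) (wgt_nonneg hK _ _ _ _)
    _ ≤ _ := Finset.sum_le_sum_of_subset_of_nonneg
        (Finset.Icc_subset_Icc_left (by omega))
        fun j _ _ => mul_nonneg (wgt_nonneg hK _ _ _ _) (aproc_nonneg _ _ _ _ _)

/-- The ratio `p̂_{t,t-h}/p̂_t`, set to zero where `p̂_t = 0`. -/
noncomputable def phatRatio (v : ℝ → ℝ) (ε : ℕ → ℕ → Ω → ℝ) (K : ℝ → ℝ) (b : ℕ → ℝ)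
    (n h t : ℕ) (ω : Ω) : ℝ :=
  if phat v ε K b n t ω = 0 then 0 else phat2 v ε K b n h t ω / phat v ε K b n t ω

lemma phatRatio_mem_Icc (v : ℝ → ℝ) (ε : ℕ → ℕ → Ω → ℝ) {K : ℝ → ℝ} (hK : ∀ z, 0 ≤ K z)
    (b : ℕ → ℝ) (n h t : ℕ) (ω : Ω) : phatRatio v ε K b n h t ω ∈ Set.Icc (0 : ℝ) 1 := by
  have h2 := phat2_nonneg v ε hK b n h t ω
  have h1 := phat2_le_phat v ε hK b n h t ω
  unfold phatRatio
  split_ifs with h0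
  · simp
  · exact ⟨div_nonneg h2 (h2.trans h1), div_le_one_of_le₀ h1 (h2.trans h1)⟩

lemma abs_phatRatio_sub_le (v : ℝ → ℝ) (ε : ℕ → ℕ → Ω → ℝ) {K : ℝ → ℝ} (hK : ∀ z, 0 ≤ K z)
    (b : ℕ → ℝ) (n h t : ℕ) (ω : Ω) {c x y : ℝ} (hc : 0 < c) (hx : c < x) :
    |phatRatio v ε K b n h t ω - y / x| ≤
      c⁻¹ * (|phat v ε K b n t ω - x| + |phat2 v ε K b n h t ω - y|) := by
  have h2 := phat2_nonneg v ε hK b n h t ω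
  have h1 := phat2_le_phat v ε hK b n h t ω
  obtain ⟨hq0, hq1⟩ := phatRatio_mem_Icc v ε hK b n h t ω
  have hmul : phatRatio v ε K b n h t ω * phat v ε K b n t ω = phat2 v ε K b n h t ω := by
    unfold phatRatio
    split_ifs with h0
    · rw [h0] at h1; linarith
    · exact div_mul_cancel₀ _ h0
  generalize phatRatio v ε K b n h t ω = q at *
  generalize phat v ε K b n t ω = P at *
  generalize phat2 v ε K b n h t ω = P2 at *
  have hx0 : 0 < x := hc.trans hx
  have heq : q - y / x = x⁻¹ * (q * (x - P) + (P2 - y)) := by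
    field_simp
    linear_combination hmul
  rw [heq, abs_mul, abs_of_pos (inv_pos.2 hx0)]
  refine mul_le_mul (inv_anti₀ hc hx.le) ?_ (abs_nonneg _) (inv_pos.2 hc).le
  refine (abs_add_le _ _).trans (add_le_add ?_ le_rfl)
  rw [abs_mul, abs_of_nonneg hq0, abs_sub_comm]
  exact mul_le_of_le_one_left (abs_nonneg _) hq1

lemma measurable_phat2 [MeasurableSpace Ω] (v : ℝ → ℝ) {ε : ℕ → ℕ → Ω → ℝ}
    (hε : ∀ n t, Measurable (ε n t)) (K : ℝ → ℝ) (b : ℕ → ℝ) (n h t : ℕ) :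
    Measurable (phat2 v ε K b n h t) :=
  Finset.measurable_fun_sum _ fun j _ =>
    ((measurable_aproc v (hε n j)).mul (measurable_aproc v (hε n (j - h)))).const_mul _

lemma measurable_phatRatio [MeasurableSpace Ω] (v : ℝ → ℝ) {ε : ℕ → ℕ → Ω → ℝ}
    (hε : ∀ n t, Measurable (ε n t)) (K : ℝ → ℝ) (b : ℕ → ℝ) (n h t : ℕ) :
    Measurable (phatRatio v ε K b n h t) := by
  have h1 : Measurable (phat v ε K b n t) := by
    rw [show phat v ε K b n t = phat2 v ε K b n 0 t from funext (phat_eq_phat2 v ε K b n t)]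
    exact measurable_phat2 v hε K b n 0 t
  exact Measurable.ite (h1 (measurableSet_singleton 0)) measurable_const
    ((measurable_phat2 v hε K b n h t).div h1)

lemma integrable_phat2 [MeasurableSpace Ω] (μ : Measure Ω) [IsFiniteMeasure μ] (v : ℝ → ℝ)
    {ε : ℕ → ℕ → Ω → ℝ}
    (hε : ∀ n t, Measurable (ε n t)) (K : ℝ → ℝ) (b : ℕ → ℝ) (n h t : ℕ) :
    Integrable (phat2 v ε K b n h t) μ := by
  refine integrable_finsetSum _ fun j _ => Integrable.const_mul ?_ _
  refine Integrable.of_bound ((measurable_aproc v (hε n j)).mul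
    (measurable_aproc v (hε n (j - h)))).aestronglyMeasurable 1 (Eventually.of_forall fun ω => ?_)
  rw [Real.norm_eq_abs, abs_of_nonneg (aproc_mul_nonneg _ _ _ _ _ _)]
  exact (aproc_mul_le _ _ _ _ _ _).trans (aproc_le_one _ _ _ _ _)

end indicators

/-- Kernel smoothing is asymptotically unbiased at interior continuity points. -/
lemma tendsto_kernel_smoothing {K : ℝ → ℝ} {R : ℝ} {b : ℕ → ℝ} (hK_cont : Continuous K)
    (hK_supp : HasCompactSupport K)
    (hK_nonneg : ∀ z, 0 ≤ K z) (hK_le : ∀ z, K z ≤ R) (hK_int : ∫ z : ℝ, K z = 1)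
    (hb_pos : ∀ n, 0 < b n) (hb0 : Tendsto b atTop (nhds 0))
    (hN : Tendsto (fun n : ℕ => (n : ℝ) * b n) atTop atTop) {u : ℝ} (hu : u ∈ Set.Ioo (0 : ℝ) 1)
    {f : ℝ → ℝ} (hf : ContinuousAt f u) (h : ℕ) :
    Tendsto (fun n : ℕ => ∑ j ∈ Finset.Icc (h + 1) n,
      wgt K b n ⌈(n : ℝ) * u⌉₊ j * f ((j : ℝ) / n)) atTop (nhds (f u)) := by
  obtain ⟨C, hC⟩ := eventually_wgt_bounds hK_cont hK_nonneg hK_le hK_int hb0 hN hu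
  rw [Metric.tendsto_nhds]
  intro e he
  obtain ⟨δ, hδ, hfδ⟩ := Metric.continuousAt_iff.1 hf (e / 2) (half_pos he)
  set δ' := min δ (u / 2) with hδ'
  have hδ'0 : 0 < δ' := lt_min hδ (half_pos hu.1)
  have hh : Tendsto (fun n : ℕ => (h : ℝ) / n) atTop (nhds 0) :=
    tendsto_const_div_atTop_nhds_zero_nat _
  filter_upwards [hC, eventually_wgt_eq_zero hK_supp hb_pos hb0 hu.1.le hδ'0,
    hh.eventually (gt_mem_nhds (half_pos hu.1)), eventually_gt_atTop 0] with n hn1 hn2 hn3 hn0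
  have hn' : (0 : ℝ) < n := by exact_mod_cast hn0
  have hsum : ∑ j ∈ Finset.Icc (h + 1) n, wgt K b n ⌈(n : ℝ) * u⌉₊ j = 1 := by
    rw [← hn1.1]
    refine Finset.sum_subset (Finset.Icc_subset_Icc_left (by omega)) fun j hj hj' => hn2 j ?_
    rw [Finset.mem_Icc] at hj hj'
    have hjh : (j : ℝ) ≤ h := by exact_mod_cast (by omega : j ≤ h)
    have : (j : ℝ) / n ≤ h / n := by gcongr
    rw [abs_sub_comm, abs_of_nonneg (by linarith [hu.1])]
    exact (min_le_right _ _).trans (by linarith)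
  have heq : ∑ j ∈ Finset.Icc (h + 1) n, wgt K b n ⌈(n : ℝ) * u⌉₊ j * f ((j : ℝ) / n) - f u =
      ∑ j ∈ Finset.Icc (h + 1) n, wgt K b n ⌈(n : ℝ) * u⌉₊ j * (f ((j : ℝ) / n) - f u) := by
    simp_rw [mul_sub]
    rw [Finset.sum_sub_distrib, ← Finset.sum_mul, hsum, one_mul]
  rw [Real.dist_eq, heq]
  refine lt_of_le_of_lt (Finset.abs_sum_le_sum_abs _ _) ?_
  calc _ ≤ ∑ j ∈ Finset.Icc (h + 1) n, wgt K b n ⌈(n : ℝ) * u⌉₊ j * (e / 2) := by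
        refine Finset.sum_le_sum fun j _ => ?_
        rw [abs_mul, abs_of_nonneg (wgt_nonneg hK_nonneg _ _ _ _)]
        rcases le_or_gt δ' |(j : ℝ) / n - u| with hj | hj
        · rw [hn2 j hj]; simp
        · exact mul_le_mul_of_nonneg_left (hfδ (hj.trans_le (min_le_left _ _))).le
            (wgt_nonneg hK_nonneg _ _ _ _)
    _ = e / 2 := by rw [← Finset.sum_mul, hsum, one_mul]
    _ < e := half_lt_self he

/-- The kernel estimators are consistent in `L¹` at interior continuity points. -/
lemma tendsto_integral_abs_phat2_sub {Ω : Type*} {m0 : MeasurableSpace Ω} (μ : Measure Ω)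
    [IsProbabilityMeasure μ] (v : ℝ → ℝ)
    {ε : ℕ → ℕ → Ω → ℝ} (hε : ∀ n t, Measurable (ε n t)) (hs : Summable (alphaMix μ ε))
    {K : ℝ → ℝ} {R : ℝ} {b : ℕ → ℝ} (hK_cont : Continuous K) (hK_supp : HasCompactSupport K)
    (hK_nonneg : ∀ z, 0 ≤ K z) (hK_le : ∀ z, K z ≤ R) (hK_int : ∫ z : ℝ, K z = 1)
    (hb_pos : ∀ n, 0 < b n) (hb0 : Tendsto b atTop (nhds 0))
    (hN : Tendsto (fun n : ℕ => (n : ℝ) * b n) atTop atTop) {u : ℝ} (hu : u ∈ Set.Ioo (0 : ℝ) 1)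
    {f : ℝ → ℝ} (hf : ContinuousAt f u) (h : ℕ)
    (hprob : ∀ n t : ℕ, h < t → t ≤ n →
      μ.real {ω | aproc v ε n t ω * aproc v ε n (t - h) ω = 1} = f ((t : ℝ) / n)) :
    Tendsto (fun n : ℕ => ∫ ω, |phat2 v ε K b n h ⌈(n : ℝ) * u⌉₊ ω - f u| ∂μ) atTop (nhds 0) := by
  obtain ⟨C, hC⟩ := eventually_wgt_bounds hK_cont hK_nonneg hK_le hK_int hb0 hN hu
  have hbias := tendsto_kernel_smoothing hK_cont hK_supp hK_nonneg hK_le hK_int hb_pos hb0 hN hu hf h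
  have hlim : Tendsto (fun n : ℕ =>
      √(1 ^ 2 * (2 * ∑' d, windowMix μ ε h d) * (C / (n * b n)) * 1) +
      |∑ j ∈ Finset.Icc (h + 1) n, wgt K b n ⌈(n : ℝ) * u⌉₊ j * f ((j : ℝ) / n) - f u|)
      atTop (nhds 0) := by
    have h1 : Tendsto (fun n : ℕ => √(1 ^ 2 * (2 * ∑' d, windowMix μ ε h d) *
        (C / (n * b n)) * 1)) atTop (nhds 0) := by
      have := ((hN.const_div_atTop C).const_mul
        (1 ^ 2 * (2 * ∑' d, windowMix μ ε h d))).mul_const (1 : ℝ)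
      simpa using this.sqrt
    simpa using h1.add (hbias.sub_const (f u)).abs
  refine squeeze_zero' (Eventually.of_forall fun n => integral_nonneg fun _ => abs_nonneg _) ?_ hlim
  filter_upwards [hC] with n hn
  set t := ⌈(n : ℝ) * u⌉₊ with ht
  set Z : ℕ → Ω → ℝ := fun j ω => aproc v ε n j ω * aproc v ε n (j - h) ω with hZ
  have hEZ : ∀ j ∈ Finset.Icc (h + 1) n, ∫ ω, Z j ω ∂μ = f ((j : ℝ) / n) := by
    intro j hj
    rw [Finset.mem_Icc] at hj
    rw [hZ, ← hprob n j (by omega) hj.2]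
    exact integral_aproc_mul μ v hε n j (j - h)
  have hconc := integral_abs_weighted_sum_le μ hε hs n h zero_le_one Z (Finset.Icc (h + 1) n)
    (fun j ω => aproc_mul_nonneg _ _ _ _ _ _)
    (fun j ω => (aproc_mul_le _ _ _ _ _ _).trans (aproc_le_one _ _ _ _ _))
    (fun j => (measurable_aproc v (measurable_pastField ε le_rfl)).mul
      (measurable_aproc v (measurable_pastField ε (Nat.sub_le _ _))))
    (fun j => (measurable_aproc v (measurable_futureField ε (Nat.sub_le _ _))).mul
      (measurable_aproc v (measurable_futureField ε le_rfl)))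
    (wgt K b n t) (fun j _ => wgt_nonneg hK_nonneg _ _ _ _) (fun j _ => hn.2 j)
  have hsplit : ∀ ω, phat2 v ε K b n h t ω - f u =
      ∑ j ∈ Finset.Icc (h + 1) n, wgt K b n t j * (Z j ω - ∫ ω', Z j ω' ∂μ) +
      (∑ j ∈ Finset.Icc (h + 1) n, wgt K b n t j * f ((j : ℝ) / n) - f u) := by
    intro ω
    rw [Finset.sum_congr rfl fun j hj => by rw [hEZ j hj]]
    simp_rw [mul_sub]
    rw [Finset.sum_sub_distrib]
    simp only [phat2, hZ]
    ring
  have hint : Integrable (fun ω => ∑ j ∈ Finset.Icc (h + 1) n,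
      wgt K b n t j * (Z j ω - ∫ ω', Z j ω' ∂μ)) μ := by
    have := ((integrable_phat2 μ v hε K b n h t).sub (integrable_const (f u))).sub
      (integrable_const (∑ j ∈ Finset.Icc (h + 1) n, wgt K b n t j * f ((j : ℝ) / n) - f u))
    refine this.congr (Eventually.of_forall fun ω => ?_)
    simp only [Pi.sub_apply]
    rw [hsplit ω]
    ring
  calc ∫ ω, |phat2 v ε K b n h t ω - f u| ∂μ
      ≤ ∫ ω, (|∑ j ∈ Finset.Icc (h + 1) n, wgt K b n t j * (Z j ω - ∫ ω', Z j ω' ∂μ)| +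
        |∑ j ∈ Finset.Icc (h + 1) n, wgt K b n t j * f ((j : ℝ) / n) - f u|) ∂μ := by
        refine integral_mono ((integrable_phat2 μ v hε K b n h t).sub (integrable_const _)).abs
          (hint.abs.add (integrable_const _)) fun ω => ?_
        simp only [hsplit ω]
        exact abs_add_le _ _
    _ ≤ _ := by
        rw [integral_add hint.abs (integrable_const _), integral_const]
        simp only [probReal_univ, one_smul]
        refine add_le_add (hconc.trans (Real.sqrt_le_sqrt ?_)) le_rfl
        refine mul_le_mul_of_nonneg_left ?_ ?_
        · rw [← hn.1]
          exact Finset.sum_le_sum_of_subset_of_nonneg (Finset.Icc_subset_Icc_left (by omega))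
            fun _ _ _ => wgt_nonneg hK_nonneg _ _ _ _
        · refine mul_nonneg (mul_nonneg (by norm_num) (mul_nonneg (by norm_num)
            (tsum_nonneg (windowMix_nonneg μ ε h)))) ?_
          exact (wgt_nonneg hK_nonneg _ _ _ _).trans (hn.2 0)

/-- Weak law of large numbers in `L¹` for weighted averages of uniformly integrable windowed
functionals of a mixing array. -/
lemma tendsto_integral_abs_average_sub {Ω : Type*} {m0 : MeasurableSpace Ω} (μ : Measure Ω)
    [IsProbabilityMeasure μ] {ε : ℕ → ℕ → Ω → ℝ} (hε : ∀ n t, Measurable (ε n t))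
    (hs : Summable (alphaMix μ ε)) (h : ℕ) (Y : ℕ → ℕ → Ω → ℝ) (hY0 : ∀ n t ω, 0 ≤ Y n t ω)
    (hYp : ∀ n t, Measurable[pastField ε n t] (Y n t))
    (hYf : ∀ n t, Measurable[futureField ε n (t - h)] (Y n t))
    (hYi : ∀ n t, 1 ≤ t → t ≤ n → Integrable (Y n t) μ)
    (htail : ∀ e > 0, ∃ A : ℝ, 0 ≤ A ∧ ∀ n t, 1 ≤ t → t ≤ n →
      ∫ ω, (Y n t ω - min (Y n t ω) A) ∂μ ≤ e)
    (y : ℕ → ℕ → ℝ) {B : ℝ} (hB : 0 ≤ B)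
    (hy : ∀ n t, 1 ≤ t → t ≤ n → y n t ∈ Set.Icc 0 B) :
    Tendsto (fun n : ℕ => ∫ ω, |(n : ℝ)⁻¹ * ∑ t ∈ Finset.Icc 1 n, y n t * Y n t ω -
      (n : ℝ)⁻¹ * ∑ t ∈ Finset.Icc 1 n, y n t * ∫ ω', Y n t ω' ∂μ| ∂μ) atTop (nhds 0) := by
  rw [Metric.tendsto_nhds]
  intro e he
  obtain ⟨A, hA, hAt⟩ := htail (e / (4 * (B + 1))) (by positivity)
  set D := ∑' d, windowMix μ ε h d with hD
  have hD0 : 0 ≤ D := tsum_nonneg (windowMix_nonneg μ ε h)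
  have hlim : Tendsto (fun n : ℕ => √(A ^ 2 * (2 * D) * (B / n) * B)) atTop (nhds 0) := by
    have := ((tendsto_const_div_atTop_nhds_zero_nat B).const_mul (A ^ 2 * (2 * D))).mul_const B
    simpa using this.sqrt
  filter_upwards [hlim.eventually (gt_mem_nhds (half_pos he)), eventually_gt_atTop 0] with n hn hn0
  have hn' : (0 : ℝ) < n := by exact_mod_cast hn0
  rw [Real.dist_eq, sub_zero, abs_of_nonneg (integral_nonneg fun _ => abs_nonneg _)]
  set Z : ℕ → Ω → ℝ := fun t ω => min (Y n t ω) A with hZ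
  set T : ℕ → Ω → ℝ := fun t ω => Y n t ω - min (Y n t ω) A with hT
  set w : ℕ → ℝ := fun t => (n : ℝ)⁻¹ * y n t with hw
  have hw0 : ∀ t ∈ Finset.Icc 1 n, 0 ≤ w t := fun t ht => by
    rw [Finset.mem_Icc] at ht
    exact mul_nonneg (inv_nonneg.2 hn'.le) (hy n t ht.1 ht.2).1
  have hwB : ∀ t ∈ Finset.Icc 1 n, w t ≤ B / n := fun t ht => by
    rw [Finset.mem_Icc] at ht
    rw [div_eq_inv_mul]
    exact mul_le_mul_of_nonneg_left (hy n t ht.1 ht.2).2 (inv_nonneg.2 hn'.le)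
  have hwsum : ∑ t ∈ Finset.Icc 1 n, w t ≤ B := by
    refine (Finset.sum_le_sum hwB).trans_eq ?_
    simp
    field_simp
  have hconc := integral_abs_weighted_sum_le μ hε hs n h hA Z (Finset.Icc 1 n)
    (fun j ω => le_min (hY0 n j ω) hA) (fun j ω => min_le_right _ _)
    (fun j => (hYp n j).min measurable_const) (fun j => (hYf n j).min measurable_const)
    w hw0 hwB
  have hZi : ∀ t ∈ Finset.Icc 1 n, Integrable (Z t) μ := fun t ht => by
    rw [Finset.mem_Icc] at ht
    exact (hYi n t ht.1 ht.2).inf (integrable_const A)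
  have hTi : ∀ t ∈ Finset.Icc 1 n, Integrable (T t) μ := fun t ht => by
    have h1 := hZi t ht
    rw [Finset.mem_Icc] at ht
    exact (hYi n t ht.1 ht.2).sub h1
  have hT0 : ∀ t ω, 0 ≤ T t ω := fun t ω => sub_nonneg.2 (min_le_left _ _)
  have hEY : ∀ t ∈ Finset.Icc 1 n, ∫ ω, Y n t ω ∂μ = ∫ ω, Z t ω ∂μ + ∫ ω, T t ω ∂μ := by
    intro t ht
    rw [← integral_add (hZi t ht) (hTi t ht)]
    simp [hZ, hT]
  have hpt : ∀ ω, |(n : ℝ)⁻¹ * ∑ t ∈ Finset.Icc 1 n, y n t * Y n t ω -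
      (n : ℝ)⁻¹ * ∑ t ∈ Finset.Icc 1 n, y n t * ∫ ω', Y n t ω' ∂μ| ≤
      |∑ t ∈ Finset.Icc 1 n, w t * (Z t ω - ∫ ω', Z t ω' ∂μ)| +
      ∑ t ∈ Finset.Icc 1 n, w t * (T t ω + ∫ ω', T t ω' ∂μ) := by
    intro ω
    have heq : (n : ℝ)⁻¹ * ∑ t ∈ Finset.Icc 1 n, y n t * Y n t ω -
      (n : ℝ)⁻¹ * ∑ t ∈ Finset.Icc 1 n, y n t * ∫ ω', Y n t ω' ∂μ =
      ∑ t ∈ Finset.Icc 1 n, w t * (Z t ω - ∫ ω', Z t ω' ∂μ) +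
      ∑ t ∈ Finset.Icc 1 n, w t * (T t ω - ∫ ω', T t ω' ∂μ) := by
      rw [Finset.mul_sum, Finset.mul_sum, ← Finset.sum_sub_distrib, ← Finset.sum_add_distrib]
      refine Finset.sum_congr rfl fun t ht => ?_
      rw [hEY t ht]
      simp only [hZ, hT, hw]
      ring
    rw [heq]
    refine (abs_add_le _ _).trans (add_le_add le_rfl ((Finset.abs_sum_le_sum_abs _ _).trans
      (Finset.sum_le_sum fun t ht => ?_)))
    rw [abs_mul, abs_of_nonneg (hw0 t ht)]
    refine mul_le_mul_of_nonneg_left ?_ (hw0 t ht)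
    have h1 := hT0 t ω
    have h2 : 0 ≤ ∫ ω', T t ω' ∂μ := integral_nonneg (hT0 t)
    rw [abs_le]
    constructor <;> linarith
  have hI1 : Integrable (fun ω => |∑ t ∈ Finset.Icc 1 n, w t * (Z t ω - ∫ ω', Z t ω' ∂μ)|) μ :=
    (integrable_finsetSum _ fun t ht => ((hZi t ht).sub (integrable_const _)).const_mul _).abs
  have hI2 : ∀ t ∈ Finset.Icc 1 n,
      Integrable (fun ω => w t * (T t ω + ∫ ω', T t ω' ∂μ)) μ := fun t ht =>
    ((hTi t ht).add (integrable_const _)).const_mul _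
  have hbd : ∫ ω, (|∑ t ∈ Finset.Icc 1 n, w t * (Z t ω - ∫ ω', Z t ω' ∂μ)| +
      ∑ t ∈ Finset.Icc 1 n, w t * (T t ω + ∫ ω', T t ω' ∂μ)) ∂μ ≤
      √(A ^ 2 * (2 * D) * (B / n) * B) + B * (2 * (e / (4 * (B + 1)))) := by
    rw [integral_add hI1 (integrable_finsetSum _ hI2)]
    refine add_le_add (hconc.trans (Real.sqrt_le_sqrt ?_)) ?_
    · exact mul_le_mul_of_nonneg_left hwsum (by positivity)
    · rw [integral_finsetSum _ hI2]
      calc _ ≤ ∑ t ∈ Finset.Icc 1 n, w t * (2 * (e / (4 * (B + 1)))) := by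
            refine Finset.sum_le_sum fun t ht => ?_
            rw [integral_const_mul, integral_add (hTi t ht) (integrable_const _), integral_const]
            simp only [probReal_univ, one_smul]
            refine mul_le_mul_of_nonneg_left ?_ (hw0 t ht)
            rw [Finset.mem_Icc] at ht
            linarith [hAt n t ht.1 ht.2]
        _ ≤ _ := by
            rw [← Finset.sum_mul]
            exact mul_le_mul_of_nonneg_right hwsum (by positivity)
  have hlast : B * (2 * (e / (4 * (B + 1)))) ≤ e / 2 := by
    rw [show B * (2 * (e / (4 * (B + 1)))) = (e / 2) * (B / (B + 1)) by field_simp; ring]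
    exact mul_le_of_le_one_right (by positivity) (div_le_one_of_le₀ (by linarith) (by positivity))
  have hmono := integral_mono_of_nonneg (μ := μ) (Eventually.of_forall fun ω => abs_nonneg _)
    (hI1.add (integrable_finsetSum _ hI2)) (Eventually.of_forall hpt)
  refine hmono.trans_lt ?_
  simp only [Pi.add_apply]
  linarith

/-- Convergence in probability of weighted averages to the integral of the local mean. -/
lemma tendstoInMeasure_average {Ω : Type*} {m0 : MeasurableSpace Ω} (μ : Measure Ω)
    [IsProbabilityMeasure μ] {ε : ℕ → ℕ → Ω → ℝ} (hε : ∀ n t, Measurable (ε n t))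
    (hs : Summable (alphaMix μ ε)) (h : ℕ) (Y : ℕ → ℕ → Ω → ℝ) (hY0 : ∀ n t ω, 0 ≤ Y n t ω)
    (hYp : ∀ n t, Measurable[pastField ε n t] (Y n t))
    (hYf : ∀ n t, Measurable[futureField ε n (t - h)] (Y n t))
    (hYi : ∀ n t, 1 ≤ t → t ≤ n → Integrable (Y n t) μ)
    (htail : ∀ e > 0, ∃ A : ℝ, 0 ≤ A ∧ ∀ n t, 1 ≤ t → t ≤ n →
      ∫ ω, (Y n t ω - min (Y n t ω) A) ∂μ ≤ e)
    (y : ℕ → ℕ → ℝ) {B : ℝ} (hB : 0 ≤ B)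
    (hy : ∀ n t, 1 ≤ t → t ≤ n → y n t ∈ Set.Icc 0 B) {B' : ℝ}
    (hB' : ∀ n t, 1 ≤ t → t ≤ n → |y n t * ∫ ω, Y n t ω ∂μ| ≤ B') (φ : ℝ → ℝ)
    (hφ : ∀ᵐ u ∂(volume.restrict (Set.Ioc (0 : ℝ) 1)),
      Tendsto (fun n : ℕ => y n ⌈(n : ℝ) * u⌉₊ * ∫ ω, Y n ⌈(n : ℝ) * u⌉₊ ω ∂μ) atTop
        (nhds (φ u))) :
    TendstoInMeasure μ (fun (n : ℕ) ω => (n : ℝ)⁻¹ * ∑ t ∈ Finset.Icc 1 n, y n t * Y n t ω) atTop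
      (fun _ => ∫ u in Set.Ioc (0 : ℝ) 1, φ u) := by
  have h1 := tendsto_integral_abs_average_sub μ hε hs h Y hY0 hYp hYf hYi htail y hB hy
  have h2 := (tendsto_average_of_ae_tendsto (fun n t => y n t * ∫ ω, Y n t ω ∂μ) B' hB' φ hφ).1
  have hint : ∀ n : ℕ, Integrable
      (fun ω => (n : ℝ)⁻¹ * ∑ t ∈ Finset.Icc 1 n, y n t * Y n t ω) μ := fun n =>
    (integrable_finsetSum _ fun t ht => by
      rw [Finset.mem_Icc] at ht
      exact (hYi n t ht.1 ht.2).const_mul _).const_mul _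
  have h3 := tendstoInMeasure_of_tendsto_integral_abs (μ := μ) (x := 0)
    (X := fun (n : ℕ) ω => (n : ℝ)⁻¹ * ∑ t ∈ Finset.Icc 1 n, y n t * Y n t ω -
      (n : ℝ)⁻¹ * ∑ t ∈ Finset.Icc 1 n, y n t * ∫ ω', Y n t ω' ∂μ)
    (fun n => (hint n).sub (integrable_const _)) (by simpa using h1)
  have h4 := tendstoInMeasure_map_const (fun p : ℝ × ℝ => p.1 + p.2)
    (tendstoInMeasure_prod_const h3 (tendstoInMeasure_const_seq (μ := μ) h2))
    (by fun_prop)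
  simpa using h4

lemma sq_sub_min_le {x A ν : ℝ} (hA : 0 < A) (hν : 0 < ν) :
    x ^ 2 - min (x ^ 2) A ≤ A ^ (-ν) * |x| ^ (2 + 2 * ν) := by
  rcases le_total (x ^ 2) A with h | h
  · rw [min_eq_left h, sub_self]
    positivity
  · have h0 : 0 < x ^ 2 := hA.trans_le h
    have hx : |x| ^ (2 + 2 * ν) = x ^ 2 * (x ^ 2) ^ ν := by
      rw [← sq_abs, ← Real.rpow_natCast |x| 2, ← Real.rpow_mul (abs_nonneg x),
        ← Real.rpow_add (by rw [← sq_abs] at h0; exact abs_pos.2 fun h => by simp [h] at h0)]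
      norm_num
    have h1 : 1 ≤ A ^ (-ν) * (x ^ 2) ^ ν := by
      rw [Real.rpow_neg hA.le, ← div_eq_inv_mul, one_le_div (Real.rpow_pos_of_pos hA _)]
      exact Real.rpow_le_rpow hA.le h hν.le
    rw [hx]
    calc x ^ 2 - min (x ^ 2) A ≤ x ^ 2 * 1 := by
          rw [min_eq_right h]; linarith
      _ ≤ x ^ 2 * (A ^ (-ν) * (x ^ 2) ^ ν) := mul_le_mul_of_nonneg_left h1 h0.le
      _ = _ := by ring

section moments

variable {Ω : Type*} [MeasurableSpace Ω] {μ : Measure Ω} {v : ℝ → ℝ}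
  {ε : ℕ → ℕ → Ω → ℝ} {ν : ℝ}

lemma div_mem_Ioc {n t : ℕ} (h1 : 1 ≤ t) (h2 : t ≤ n) : (t : ℝ) / n ∈ Set.Ioc (0 : ℝ) 1 := by
  have h1' : (0 : ℝ) < t := by exact_mod_cast h1
  have h2' : (t : ℝ) ≤ n := by exact_mod_cast h2
  exact ⟨div_pos h1' (h1'.trans_le h2'), div_le_one_of_le₀ h2' (by positivity)⟩

lemma integrable_abs_rpow (hε : ∀ n t, Measurable (ε n t)) {M : ℝ}
    (hmom : ∀ n t : ℕ, 1 ≤ t → t ≤ n →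
      ∫⁻ ω, ENNReal.ofReal (|ε n t ω| ^ (2 + 2 * ν)) ∂μ ≤ ENNReal.ofReal M)
    {n t : ℕ} (h1 : 1 ≤ t) (h2 : t ≤ n) :
    Integrable (fun ω => |ε n t ω| ^ (2 + 2 * ν)) μ ∧
      ∫ ω, |ε n t ω| ^ (2 + 2 * ν) ∂μ ≤ max M 0 := by
  have hm : Measurable (fun ω => |ε n t ω| ^ (2 + 2 * ν)) :=
    ((hε n t).norm).pow_const _
  have hnn : ∀ ω, 0 ≤ |ε n t ω| ^ (2 + 2 * ν) := fun ω => by positivity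
  have hfin := (hmom n t h1 h2).trans_lt ENNReal.ofReal_lt_top
  constructor
  · refine ⟨hm.aestronglyMeasurable, ?_⟩
    rw [hasFiniteIntegral_iff_ofReal (Eventually.of_forall hnn)]
    exact hfin
  · rw [integral_eq_lintegral_of_nonneg_ae (Eventually.of_forall hnn) hm.aestronglyMeasurable]
    refine (ENNReal.toReal_mono ENNReal.ofReal_ne_top (hmom n t h1 h2)).trans_eq ?_
    exact ENNReal.toReal_ofReal'

lemma integrable_sq_of_moment [IsFiniteMeasure μ] (hν : 0 < ν) (hε : ∀ n t, Measurable (ε n t)) {M : ℝ}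
    (hmom : ∀ n t : ℕ, 1 ≤ t → t ≤ n →
      ∫⁻ ω, ENNReal.ofReal (|ε n t ω| ^ (2 + 2 * ν)) ∂μ ≤ ENNReal.ofReal M)
    {n t : ℕ} (h1 : 1 ≤ t) (h2 : t ≤ n) : Integrable (fun ω => ε n t ω ^ 2) μ := by
  refine Integrable.mono' ((integrable_const (1 : ℝ)).add
    (integrable_abs_rpow hε hmom h1 h2).1) ((hε n t).pow_const 2).aestronglyMeasurable
    (Eventually.of_forall fun ω => ?_)
  have := sq_sub_min_le (x := ε n t ω) zero_lt_one hν
  rw [Real.one_rpow, one_mul] at this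
  rw [Real.norm_eq_abs, abs_of_nonneg (sq_nonneg _)]
  simp only [Pi.add_apply]
  linarith [min_le_right (ε n t ω ^ 2) 1]

lemma integrable_rproc_sq [IsFiniteMeasure μ] (hν : 0 < ν) (hε : ∀ n t, Measurable (ε n t)) {M : ℝ}
    (hmom : ∀ n t : ℕ, 1 ≤ t → t ≤ n →
      ∫⁻ ω, ENNReal.ofReal (|ε n t ω| ^ (2 + 2 * ν)) ∂μ ≤ ENNReal.ofReal M)
    {n t : ℕ} (h1 : 1 ≤ t) (h2 : t ≤ n) : Integrable (fun ω => rproc v ε n t ω ^ 2) μ := by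
  unfold rproc
  simp_rw [mul_pow]
  exact (integrable_sq_of_moment hν hε hmom h1 h2).const_mul _

/-- The squared returns are uniformly integrable. -/
lemma exists_tail_rproc_sq (hν : 0 < ν) (hε : ∀ n t, Measurable (ε n t)) {M Mv : ℝ}
    (hv : ∀ s ∈ Set.Ioc (0 : ℝ) 1, |v s| ≤ Mv)
    (hmom : ∀ n t : ℕ, 1 ≤ t → t ≤ n →
      ∫⁻ ω, ENNReal.ofReal (|ε n t ω| ^ (2 + 2 * ν)) ∂μ ≤ ENNReal.ofReal M) {e : ℝ} (he : 0 < e) :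
    ∃ A : ℝ, 0 ≤ A ∧ ∀ n t, 1 ≤ t → t ≤ n →
      ∫ ω, (rproc v ε n t ω ^ 2 - min (rproc v ε n t ω ^ 2) A) ∂μ ≤ e := by
  have hlim : Tendsto (fun A : ℝ => A ^ (-ν) * (Mv ^ (2 + 2 * ν) * max M 0)) atTop (nhds 0) := by
    simpa using (tendsto_rpow_neg_atTop hν).mul_const (Mv ^ (2 + 2 * ν) * max M 0)
  obtain ⟨A, hAe, hA⟩ := ((hlim.eventually (gt_mem_nhds he)).and (eventually_gt_atTop 0)).exists
  refine ⟨A, hA.le, fun n t h1 h2 => le_trans ?_ hAe.le⟩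
  obtain ⟨hi, hle⟩ := integrable_abs_rpow hε hmom h1 h2
  have hvt := hv _ (div_mem_Ioc h1 h2)
  have hMv : 0 ≤ Mv := (abs_nonneg _).trans hvt
  calc ∫ ω, (rproc v ε n t ω ^ 2 - min (rproc v ε n t ω ^ 2) A) ∂μ
      ≤ ∫ ω, A ^ (-ν) * (Mv ^ (2 + 2 * ν) * |ε n t ω| ^ (2 + 2 * ν)) ∂μ := by
        refine integral_mono_of_nonneg (Eventually.of_forall fun ω => ?_)
          ((hi.const_mul _).const_mul _) (Eventually.of_forall fun ω => ?_)
        · exact sub_nonneg.2 (min_le_left _ _)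
        · refine (sq_sub_min_le hA hν).trans ?_
          refine mul_le_mul_of_nonneg_left ?_ (by positivity)
          rw [rproc, abs_mul, Real.mul_rpow (abs_nonneg _) (abs_nonneg _)]
          refine mul_le_mul_of_nonneg_right ?_ (by positivity)
          exact Real.rpow_le_rpow (abs_nonneg _) hvt (by positivity)
    _ ≤ _ := by
        rw [integral_const_mul, integral_const_mul]
        refine mul_le_mul_of_nonneg_left ?_ (by positivity)
        exact mul_le_mul_of_nonneg_left hle (by positivity)

/-- The second moment of the returns is `v² g₀`. -/
lemma integral_rproc_sq (hε : ∀ n t, Measurable (ε n t)) {n t : ℕ} {x : ℝ} (hx : 0 < x)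
    (hp : μ.real {ω | aproc v ε n t ω = 1} = x) (hv : 0 < v ((t : ℝ) / n))
    (hident : ∫ ω, (ε n t ω) ^ 2 ∂(μ[|{ω | aproc v ε n t ω = 1}]) = 1) :
    ∫ ω, rproc v ε n t ω ^ 2 ∂μ = v ((t : ℝ) / n) ^ 2 * x := by
  set S := {ω | aproc v ε n t ω = 1} with hS
  have hSm : MeasurableSet S := (measurable_aproc v (hε n t)) (measurableSet_singleton 1)
  rw [ProbabilityTheory.cond, integral_smul_measure] at hident
  have hset : ∫ ω in S, ε n t ω ^ 2 ∂μ = ∫ ω, ε n t ω ^ 2 ∂μ := by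
    refine setIntegral_eq_integral_of_forall_compl_eq_zero fun ω hω => ?_
    by_contra hne
    refine hω ?_
    have : ε n t ω ≠ 0 := fun h => hne (by simp [h])
    simp [hS, aproc, rproc, hv.ne', this]
  rw [hset, ENNReal.toReal_inv, ← Measure.real, hp, smul_eq_mul, inv_mul_eq_one₀ hx.ne'] at hident
  unfold rproc
  simp_rw [mul_pow]
  rw [integral_const_mul, ← hident]

end moments

lemma sum_Icc_succ_eq_sum_ite (k n : ℕ) (f : ℕ → ℝ) :
    ∑ t ∈ Finset.Icc (k + 1) n, f t = ∑ t ∈ Finset.Icc 1 n, if k < t then f t else 0 := by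
  rw [← Finset.sum_filter]
  congr 1
  ext t
  simp only [Finset.mem_Icc, Finset.mem_filter]
  omega

/-- Normalising by `n - k` instead of `n` does not affect limits in probability. -/
lemma tendstoInMeasure_inv_sub_mul {Ω : Type*} [MeasurableSpace Ω] {μ : Measure Ω}
    [IsFiniteMeasure μ] {S : ℕ → Ω → ℝ} {x : ℝ} (k : ℕ)
    (hS : TendstoInMeasure μ (fun (n : ℕ) ω => (n : ℝ)⁻¹ * S n ω) atTop (fun _ => x)) :
    TendstoInMeasure μ (fun (n : ℕ) ω => ((n : ℝ) - k)⁻¹ * S n ω) atTop (fun _ => x) := by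
  have h1 : Tendsto (fun n : ℕ => (n : ℝ) / (n + -(k : ℝ))) atTop (nhds 1) :=
    tendsto_natCast_div_add_atTop _
  have h2 := tendstoInMeasure_map_const (fun p : ℝ × ℝ => p.1 * p.2)
    (tendstoInMeasure_prod_const (tendstoInMeasure_const_seq (μ := μ) h1) hS) (by fun_prop)
  refine h2.congr' ?_ (Eventually.of_forall fun _ => one_mul x)
  filter_upwards [eventually_gt_atTop 0] with n hn
  refine Eventually.of_forall fun ω => ?_
  have hn' : (n : ℝ) ≠ 0 := by exact_mod_cast hn.ne'
  simp only [← sub_eq_add_neg]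
  rw [div_eq_mul_inv]
  field_simp

/-- Trimmed averages of `G(t/n) Y_t`, where `E Y_t = F(t/n)`, converge in probability to `∫ G F`. -/
lemma tendstoInMeasure_trimmed_average {Ω : Type*} {m0 : MeasurableSpace Ω} (μ : Measure Ω)
    [IsProbabilityMeasure μ] {ε : ℕ → ℕ → Ω → ℝ} (hε : ∀ n t, Measurable (ε n t))
    (hs : Summable (alphaMix μ ε)) (h k : ℕ) (Y : ℕ → ℕ → Ω → ℝ) (hY0 : ∀ n t ω, 0 ≤ Y n t ω)
    (hYp : ∀ n t, Measurable[pastField ε n t] (Y n t))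
    (hYf : ∀ n t, Measurable[futureField ε n (t - h)] (Y n t))
    (hYi : ∀ n t, 1 ≤ t → t ≤ n → Integrable (Y n t) μ)
    (htail : ∀ e > 0, ∃ A : ℝ, 0 ≤ A ∧ ∀ n t, 1 ≤ t → t ≤ n →
      ∫ ω, (Y n t ω - min (Y n t ω) A) ∂μ ≤ e)
    {F G : ℝ → ℝ} {B B' : ℝ} (hG : ∀ s ∈ Set.Ioc (0 : ℝ) 1, G s ∈ Set.Icc 0 B)
    (hF : ∀ s ∈ Set.Ioc (0 : ℝ) 1, F s ∈ Set.Icc 0 B')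
    (hGc : ∀ᵐ u ∂(volume.restrict (Set.Ioc (0 : ℝ) 1)), ContinuousAt G u)
    (hFc : ∀ᵐ u ∂(volume.restrict (Set.Ioc (0 : ℝ) 1)), ContinuousAt F u)
    (hYF : ∀ n t : ℕ, k < t → t ≤ n → ∫ ω, Y n t ω ∂μ = F ((t : ℝ) / n)) :
    TendstoInMeasure μ (fun (n : ℕ) ω => ((n : ℝ) - k)⁻¹ *
        ∑ t ∈ Finset.Icc (k + 1) n, G ((t : ℝ) / n) * Y n t ω) atTop
      (fun _ => ∫ u in Set.Ioc (0 : ℝ) 1, G u * F u) := by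
  have hB : 0 ≤ B := (hG 1 (by simp)).1.trans (hG 1 (by simp)).2
  have hB' : 0 ≤ B' := (hF 1 (by simp)).1.trans (hF 1 (by simp)).2
  refine tendstoInMeasure_inv_sub_mul k ?_
  have := tendstoInMeasure_average μ hε hs h Y hY0 hYp hYf hYi htail
    (fun n t => if k < t then G ((t : ℝ) / n) else 0) hB (fun n t h1 h2 => by
      split_ifs
      · exact hG _ (div_mem_Ioc h1 h2)
      · exact ⟨le_rfl, hB⟩) (B' := B * B') (fun n t h1 h2 => by
      split_ifs with hk
      · have hGt := hG _ (div_mem_Ioc h1 h2)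
        have hFt := hF _ (div_mem_Ioc h1 h2)
        rw [hYF n t hk h2, abs_of_nonneg (mul_nonneg hGt.1 hFt.1)]
        exact mul_le_mul hGt.2 hFt.2 hFt.1 hB
      · simpa using mul_nonneg hB hB') (fun u => G u * F u) (by
      filter_upwards [hGc, hFc, ae_restrict_mem measurableSet_Ioc] with u hGu hFu hu
      have hlim := tendsto_ceil_div hu.1.le
      refine ((hGu.tendsto.comp hlim).mul (hFu.tendsto.comp hlim)).congr' ?_
      filter_upwards [(tendsto_ceil_atTop hu.1).eventually (eventually_gt_atTop k),
        eventually_gt_atTop 0] with n hk hn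
      simp only [Function.comp_apply]
      rw [if_pos hk, hYF _ _ hk (ceil_mem_Icc hn hu).2])
  refine this.congr_left fun n => Eventually.of_forall fun ω => ?_
  simp only [ite_mul, zero_mul]
  rw [sum_Icc_succ_eq_sum_ite k n]

lemma mul_sq_le_add_sq_sub_min {q Q x A : ℝ} (hq : 0 ≤ q) (hqQ : q ≤ Q) :
    x ^ 2 * q ≤ A * q + Q * (x ^ 2 - min (x ^ 2) A) := by
  have h1 : x ^ 2 * q ≤ A * q + q * (x ^ 2 - min (x ^ 2) A) := by
    nlinarith [min_le_right (x ^ 2) A]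
  exact h1.trans (add_le_add le_rfl (mul_le_mul_of_nonneg_right hqQ
    (sub_nonneg.2 (min_le_left _ _))))

/-- Replacing the estimated ratios `p̂_{t,t-h}/p̂_t` by `g_h(t/n)/g_0(t/n)` is asymptotically
negligible. -/
lemma tendstoInMeasure_average_phatRatio_sub {Ω : Type*} {m0 : MeasurableSpace Ω} (μ : Measure Ω)
    [IsProbabilityMeasure μ] {v : ℝ → ℝ} {ε : ℕ → ℕ → Ω → ℝ} (hε : ∀ n t, Measurable (ε n t))
    {K : ℝ → ℝ} (hK : ∀ z, 0 ≤ K z) (b : ℕ → ℝ) (h : ℕ)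
    (hri : ∀ n t, 1 ≤ t → t ≤ n → Integrable (fun ω => rproc v ε n t ω ^ 2) μ)
    (htail : ∀ e > 0, ∃ A : ℝ, 0 ≤ A ∧ ∀ n t, 1 ≤ t → t ≤ n →
      ∫ ω, (rproc v ε n t ω ^ 2 - min (rproc v ε n t ω ^ 2) A) ∂μ ≤ e)
    {B : ℝ} (hrB : ∀ n t, 1 ≤ t → t ≤ n → ∫ ω, rproc v ε n t ω ^ 2 ∂μ ≤ B)
    {f₀ f : ℝ → ℝ} {c : ℝ} (hc : 0 < c)
    (hf₀ : ∀ s ∈ Set.Ioc (0 : ℝ) 1, c < f₀ s)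
    (hf : ∀ s ∈ Set.Ioc (0 : ℝ) 1, f s ∈ Set.Icc (0 : ℝ) 1)
    (hf₀c : ∀ᵐ u ∂(volume.restrict (Set.Ioc (0 : ℝ) 1)), ContinuousAt f₀ u)
    (hfc : ∀ᵐ u ∂(volume.restrict (Set.Ioc (0 : ℝ) 1)), ContinuousAt f u)
    (hp₀ : ∀ u ∈ Set.Ioo (0 : ℝ) 1, ContinuousAt f₀ u → Tendsto
      (fun n : ℕ => ∫ ω, |phat2 v ε K b n 0 ⌈(n : ℝ) * u⌉₊ ω - f₀ u| ∂μ) atTop (nhds 0))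
    (hp : ∀ u ∈ Set.Ioo (0 : ℝ) 1, ContinuousAt f u → Tendsto
      (fun n : ℕ => ∫ ω, |phat2 v ε K b n h ⌈(n : ℝ) * u⌉₊ ω - f u| ∂μ) atTop (nhds 0)) :
    TendstoInMeasure μ (fun (n : ℕ) ω => ((n : ℝ) - h)⁻¹ * ∑ t ∈ Finset.Icc (h + 1) n,
      rproc v ε n t ω ^ 2 * (phatRatio v ε K b n h t ω - f ((t : ℝ) / n) / f₀ ((t : ℝ) / n)))
      atTop (fun _ => 0) := by
  refine tendstoInMeasure_inv_sub_mul h ?_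
  set q : ℕ → ℕ → Ω → ℝ := fun n t ω =>
    phatRatio v ε K b n h t ω - f ((t : ℝ) / n) / f₀ ((t : ℝ) / n) with hq
  set Q : ℝ := 1 + c⁻¹ with hQ
  have hQ0 : 0 ≤ Q := by positivity
  have hqQ : ∀ n t, 1 ≤ t → t ≤ n → ∀ ω, |q n t ω| ≤ Q := fun n t h1 h2 ω => by
    obtain ⟨hr0, hr1⟩ := phatRatio_mem_Icc v ε hK b n h t ω
    obtain ⟨hg0, hg1⟩ := hf _ (div_mem_Ioc h1 h2)
    have hg := hf₀ _ (div_mem_Ioc h1 h2)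
    have hd0 : 0 ≤ f ((t : ℝ) / n) / f₀ ((t : ℝ) / n) := div_nonneg hg0 (hc.trans hg).le
    have hd1 : f ((t : ℝ) / n) / f₀ ((t : ℝ) / n) ≤ c⁻¹ := by
      rw [← one_div]
      exact div_le_div₀ zero_le_one hg1 hc hg.le
    have hc' : 0 < c⁻¹ := inv_pos.2 hc
    simp only [hq, hQ]
    rw [abs_le]
    constructor <;> linarith
  have hqm : ∀ n t, Measurable (q n t) := fun n t =>
    (measurable_phatRatio v hε K b n h t).sub_const _
  have hqi : ∀ n t, 1 ≤ t → t ≤ n → Integrable (fun ω => |q n t ω|) μ := fun n t h1 h2 =>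
    (Integrable.of_bound (hqm n t).aestronglyMeasurable Q
      (Eventually.of_forall (hqQ n t h1 h2))).abs
  have hrqi : ∀ n t, 1 ≤ t → t ≤ n → Integrable (fun ω => rproc v ε n t ω ^ 2 * q n t ω) μ :=
    fun n t h1 h2 => (hri n t h1 h2).mul_bdd (hqm n t).aestronglyMeasurable
      (Eventually.of_forall (hqQ n t h1 h2))
  have hmi : ∀ n t A, 1 ≤ t → t ≤ n → Integrable
      (fun ω => rproc v ε n t ω ^ 2 - min (rproc v ε n t ω ^ 2) A) μ := fun n t A h1 h2 =>
    (hri n t h1 h2).sub ((hri n t h1 h2).inf (integrable_const A))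
  set x : ℕ → ℕ → ℝ := fun n t =>
    if h < t then ∫ ω, |rproc v ε n t ω ^ 2 * q n t ω| ∂μ else 0 with hx
  have hx0 : ∀ n t, 0 ≤ x n t := fun n t => by
    simp only [hx]
    split_ifs
    · exact integral_nonneg fun _ => abs_nonneg _
    · exact le_rfl
  -- the truncation bound on each summand
  have hxle : ∀ A, 0 ≤ A → ∀ n t, 1 ≤ t → t ≤ n → x n t ≤ A * ∫ ω, |q n t ω| ∂μ +
      Q * ∫ ω, (rproc v ε n t ω ^ 2 - min (rproc v ε n t ω ^ 2) A) ∂μ := by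
    intro A hA n t h1 h2
    have hpos : 0 ≤ A * ∫ ω, |q n t ω| ∂μ +
        Q * ∫ ω, (rproc v ε n t ω ^ 2 - min (rproc v ε n t ω ^ 2) A) ∂μ :=
      add_nonneg (mul_nonneg hA (integral_nonneg fun _ => abs_nonneg _))
        (mul_nonneg hQ0 (integral_nonneg fun _ => sub_nonneg.2 (min_le_left _ _)))
    simp only [hx]
    split_ifs
    · rw [← integral_const_mul, ← integral_const_mul,
        ← integral_add ((hqi n t h1 h2).const_mul A) ((hmi n t A h1 h2).const_mul Q)]
      refine integral_mono (hrqi n t h1 h2).abs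
        (((hqi n t h1 h2).const_mul A).add ((hmi n t A h1 h2).const_mul Q)) fun ω => ?_
      simp only [abs_mul, abs_of_nonneg (sq_nonneg (rproc v ε n t ω))]
      exact mul_sq_le_add_sq_sub_min (abs_nonneg _) (hqQ n t h1 h2 ω)
    · exact hpos
  have hqlim : ∀ u ∈ Set.Ioo (0 : ℝ) 1, ContinuousAt f₀ u → ContinuousAt f u →
      Tendsto (fun n : ℕ => ∫ ω, |q n ⌈(n : ℝ) * u⌉₊ ω| ∂μ) atTop (nhds 0) := by
    intro u hu hu₀ hu'
    have hcl := tendsto_ceil_div hu.1.le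
    have hd₀ : Tendsto (fun n : ℕ => |f₀ u - f₀ ((⌈(n : ℝ) * u⌉₊ : ℝ) / n)|) atTop (nhds 0) := by
      simpa using ((tendsto_const_nhds (x := f₀ u)).sub (hu₀.tendsto.comp hcl)).abs
    have hd : Tendsto (fun n : ℕ => |f u - f ((⌈(n : ℝ) * u⌉₊ : ℝ) / n)|) atTop (nhds 0) := by
      simpa using ((tendsto_const_nhds (x := f u)).sub (hu'.tendsto.comp hcl)).abs
    have hbound := ((((hp₀ u hu hu₀).add hd₀).add ((hp u hu hu').add hd)).const_mul c⁻¹)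
    simp only [add_zero, mul_zero] at hbound
    refine squeeze_zero' (Eventually.of_forall fun n => integral_nonneg fun _ => abs_nonneg _)
      ?_ hbound
    filter_upwards [eventually_gt_atTop 0] with n hn
    obtain ⟨h1, h2⟩ := ceil_mem_Icc hn ⟨hu.1, hu.2.le⟩
    generalize ⌈(n : ℝ) * u⌉₊ = t at h1 h2 ⊢
    have hi₀ : Integrable (fun ω => |phat2 v ε K b n 0 t ω - f₀ u|) μ :=
      ((integrable_phat2 μ v hε K b n 0 t).sub (integrable_const _)).abs
    have hi : Integrable (fun ω => |phat2 v ε K b n h t ω - f u|) μ :=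
      ((integrable_phat2 μ v hε K b n h t).sub (integrable_const _)).abs
    have hi₀' : Integrable (fun ω => |phat2 v ε K b n 0 t ω - f₀ u| + |f₀ u - f₀ ((t : ℝ) / n)|) μ :=
      hi₀.add (integrable_const _)
    have hi' : Integrable (fun ω => |phat2 v ε K b n h t ω - f u| + |f u - f ((t : ℝ) / n)|) μ :=
      hi.add (integrable_const _)
    calc ∫ ω, |q n t ω| ∂μ
        ≤ ∫ ω, c⁻¹ * ((|phat2 v ε K b n 0 t ω - f₀ u| + |f₀ u - f₀ ((t : ℝ) / n)|) +
            (|phat2 v ε K b n h t ω - f u| + |f u - f ((t : ℝ) / n)|)) ∂μ := by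
          refine integral_mono (hqi n t h1 h2) ((hi₀'.add hi').const_mul _) fun ω => ?_
          refine (abs_phatRatio_sub_le v ε hK b n h t ω hc (hf₀ _ (div_mem_Ioc h1 h2))).trans ?_
          rw [phat_eq_phat2]
          refine mul_le_mul_of_nonneg_left ?_ (inv_nonneg.2 hc.le)
          exact add_le_add (abs_sub_le _ _ _) (abs_sub_le _ _ _)
      _ = _ := by
          rw [integral_const_mul, integral_add hi₀' hi',
            integral_add hi₀ (integrable_const _), integral_add hi (integrable_const _)]
          simp
  have hxlim : ∀ᵐ u ∂(volume.restrict (Set.Ioc (0 : ℝ) 1)),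
      Tendsto (fun n : ℕ => x n ⌈(n : ℝ) * u⌉₊) atTop (nhds 0) := by
    have hne : ∀ᵐ u ∂(volume.restrict (Set.Ioc (0 : ℝ) 1)), u ≠ 1 :=
      ae_restrict_of_ae (by simp [ae_iff])
    filter_upwards [hf₀c, hfc, hne, ae_restrict_mem measurableSet_Ioc] with u hu₀ hu hu1 hmem
    have hlim := hqlim u ⟨hmem.1, lt_of_le_of_ne hmem.2 hu1⟩ hu₀ hu
    rw [Metric.tendsto_nhds]
    intro e he
    obtain ⟨A, hA, hAt⟩ := htail (e / (2 * (Q + 1))) (by positivity)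
    have hlimA : Tendsto (fun n : ℕ => A * ∫ ω, |q n ⌈(n : ℝ) * u⌉₊ ω| ∂μ) atTop (nhds 0) := by
      simpa using hlim.const_mul A
    filter_upwards [hlimA.eventually (gt_mem_nhds (half_pos he)), eventually_gt_atTop 0]
      with n hn hn0
    obtain ⟨h1, h2⟩ := ceil_mem_Icc hn0 hmem
    rw [Real.dist_eq, sub_zero, abs_of_nonneg (hx0 _ _)]
    have hle := mul_le_mul_of_nonneg_left (hAt n _ h1 h2) hQ0
    have hlast : Q * (e / (2 * (Q + 1))) ≤ e / 2 := by
      rw [show Q * (e / (2 * (Q + 1))) = (e / 2) * (Q / (Q + 1)) by field_simp]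
      exact mul_le_of_le_one_right (by positivity) (div_le_one_of_le₀ (by linarith) (by positivity))
    linarith [hxle A hA n _ h1 h2]
  have hxavg := (tendsto_average_of_ae_tendsto x (Q * B) (fun n t h1 h2 => by
    rw [abs_of_nonneg (hx0 n t)]
    refine (hxle 0 le_rfl n t h1 h2).trans ?_
    rw [zero_mul, zero_add]
    refine mul_le_mul_of_nonneg_left ((integral_mono (hmi n t 0 h1 h2) (hri n t h1 h2)
      fun ω => ?_).trans (hrB n t h1 h2)) hQ0
    simp [min_eq_right (sq_nonneg (rproc v ε n t ω))]) (fun _ => 0) hxlim).1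
  rw [integral_zero] at hxavg
  have hmem : ∀ {n t : ℕ}, t ∈ Finset.Icc (h + 1) n → 1 ≤ t ∧ t ≤ n := fun ht => by
    rw [Finset.mem_Icc] at ht
    omega
  refine tendstoInMeasure_of_tendsto_integral_abs (fun n => (integrable_finsetSum _ fun t ht =>
    hrqi n t (hmem ht).1 (hmem ht).2).const_mul _) ?_
  refine squeeze_zero (fun n => integral_nonneg fun _ => abs_nonneg _) (fun n => ?_) hxavg
  have hsum : ∑ t ∈ Finset.Icc 1 n, x n t =
      ∑ t ∈ Finset.Icc (h + 1) n, ∫ ω, |rproc v ε n t ω ^ 2 * q n t ω| ∂μ :=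
    (sum_Icc_succ_eq_sum_ite _ _ _).symm
  rw [hsum, ← integral_finsetSum _ fun t ht => (hrqi n t (hmem ht).1 (hmem ht).2).abs,
    ← integral_const_mul]
  refine integral_mono_of_nonneg (Eventually.of_forall fun _ => abs_nonneg _)
    ((integrable_finsetSum _ fun t ht => (hrqi n t (hmem ht).1 (hmem ht).2).abs).const_mul _)
    (Eventually.of_forall fun ω => ?_)
  simp only [sub_zero]
  rw [abs_mul, abs_of_nonneg (inv_nonneg.2 n.cast_nonneg)]
  exact mul_le_mul_of_nonneg_left (Finset.abs_sum_le_sum_abs _ _) (inv_nonneg.2 n.cast_nonneg)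

lemma tendstoInMeasure_finset_sum {Ω ι : Type*} [MeasurableSpace Ω] {μ : Measure Ω}
    [IsFiniteMeasure μ] (s : Finset ι) {X : ι → ℕ → Ω → ℝ} {x : ι → ℝ}
    (hX : ∀ i ∈ s, TendstoInMeasure μ (X i) atTop (fun _ => x i)) :
    TendstoInMeasure μ (fun n ω => ∑ i ∈ s, X i n ω) atTop (fun _ => ∑ i ∈ s, x i) := by
  classical
  induction s using Finset.induction_on with
  | empty =>
    simpa using tendstoInMeasure_const_seq (μ := μ) (tendsto_const_nhds (x := (0 : ℝ)))
  | insert i s hi ih =>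
    simp_rw [Finset.sum_insert hi]
    have h := tendstoInMeasure_map_const (fun p : ℝ × ℝ => p.1 + p.2)
      (tendstoInMeasure_prod_const (hX i (Finset.mem_insert_self i s))
        (ih fun j hj => hX j (Finset.mem_insert_of_mem hj))) (by fun_prop)
    simpa only using h

lemma tendstoInMeasure_div {Ω : Type*} [MeasurableSpace Ω] {μ : Measure Ω} {X Y : ℕ → Ω → ℝ}
    {x y : ℝ} (hX : TendstoInMeasure μ X atTop (fun _ => x))
    (hY : TendstoInMeasure μ Y atTop (fun _ => y)) (hy : y ≠ 0) :
    TendstoInMeasure μ (fun n ω => X n ω / Y n ω) atTop (fun _ => x / y) := by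
  have h := tendstoInMeasure_map_const (fun p : ℝ × ℝ => p.1 / p.2)
    (tendstoInMeasure_prod_const hX hY) (continuousAt_fst.div continuousAt_snd hy)
  simpa only using h

/-- A bounded, strictly positive, almost everywhere continuous function on `(0, 1]` has a strictly
positive integral. -/
lemma setIntegral_pos_of_ae_continuousAt {F : ℝ → ℝ} {B : ℝ}
    (hF : ∀ s ∈ Set.Ioc (0 : ℝ) 1, 0 < F s) (hB : ∀ s ∈ Set.Ioc (0 : ℝ) 1, F s ≤ B)
    (hFc : ∀ᵐ u ∂(volume.restrict (Set.Ioc (0 : ℝ) 1)), ContinuousAt F u) :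
    0 < ∫ s in Set.Ioc (0 : ℝ) 1, F s := by
  have hint : IntegrableOn F (Set.Ioc (0 : ℝ) 1) := by
    refine (tendsto_average_of_ae_tendsto (fun n t => F ((t : ℝ) / n)) B (fun n t h1 h2 => ?_) F
      ?_).2
    · rw [abs_of_pos (hF _ (div_mem_Ioc h1 h2))]
      exact hB _ (div_mem_Ioc h1 h2)
    · filter_upwards [hFc, ae_restrict_mem measurableSet_Ioc] with u hu hmem
      exact hu.tendsto.comp (tendsto_ceil_div hmem.1.le)
  rw [setIntegral_pos_iff_support_of_nonneg_ae ?_ hint]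
  · have : Function.support F ∩ Set.Ioc (0 : ℝ) 1 = Set.Ioc 0 1 :=
      Set.inter_eq_right.2 fun s hs => (hF s hs).ne'
    simp [this]
  · filter_upwards [ae_restrict_mem measurableSet_Ioc] with s hs using (hF s hs).le

/-- Under the non-stationary zero-returns model with mixing and the
kernel/bandwidth assumption, if `Δ_h ≠ 0` for some `h ∈ {1,…,m}` then the index
`κ̂_m = Σ_{h=1}^m Δ̂_h²` converges in probability to the strictly positive constant
`C = Σ_{h=1}^m Δ_h² > 0`. -/
theorem stmt13 {Ω : Type*} [MeasurableSpace Ω] (μ : Measure Ω) [IsProbabilityMeasure μ]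
    (m : ℕ) (v : ℝ → ℝ) (g : ℕ → ℝ → ℝ) (c : ℝ) (ε : ℕ → ℕ → Ω → ℝ) (ν μ2 : ℝ)
    (K : ℝ → ℝ) (R : ℝ) (b : ℕ → ℝ)
    -- deterministic variance function `v`
    (hc : 0 < c)
    (hv_pos : ∀ s ∈ Set.Ioc (0 : ℝ) 1, 0 < v s)
    (hv_bdd : ∃ M, ∀ s ∈ Set.Ioc (0 : ℝ) 1, |v s| ≤ M)
    (hv_lip : PiecewiseLipschitzOn01 v)
    (hv_ext : ∃ L, Tendsto v (nhdsWithin 0 (Set.Ioi 0)) (nhds L) ∧ ∀ u ≤ (0 : ℝ), v u = L)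
    -- deterministic zero-returns probability functions `g_h`, `h = 0,…,m`
    (hg_bnd : ∀ h ≤ m, ∀ s ∈ Set.Ioc (0 : ℝ) 1, c < g h s ∧ g h s ≤ 1)
    (hg_lip : ∀ h ≤ m, PiecewiseLipschitzOn01 (g h))
    (hg_ext : ∀ h ≤ m, ∃ L, Tendsto (g h) (nhdsWithin 0 (Set.Ioi 0)) (nhds L) ∧
      ∀ u ≤ (0 : ℝ), g h u = L)
    -- the innovations are measurable and `P(a_t a_{t-h} = 1) = g_h(t/n)`
    (hε_meas : ∀ n t, Measurable (ε n t))
    (hprob : ∀ h ≤ m, ∀ n t : ℕ, h < t → t ≤ n →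
      (μ {ω | aproc v ε n t ω * aproc v ε n (t - h) ω = 1}).toReal = g h ((t : ℝ) / n))
    -- identifiability: `E(ε_t | a_t = 1) = 0` and `E(ε_t² | a_t = 1) = 1`
    (hident1 : ∀ n t : ℕ, 1 ≤ t → t ≤ n →
      ∫ ω, ε n t ω ∂(μ[|{ω | aproc v ε n t ω = 1}]) = 0)
    (hident2 : ∀ n t : ℕ, 1 ≤ t → t ≤ n →
      ∫ ω, (ε n t ω) ^ 2 ∂(μ[|{ω | aproc v ε n t ω = 1}]) = 1)
    -- conditional strict stationarity
    (hstat : ∀ n k t h : ℕ,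
      (μ[|{ω | (∀ i ≤ k, aproc v ε n (t + i) ω = 1) ∧
          ∀ i ≤ k, aproc v ε n (t + h + i) ω = 1}]).map
        (fun ω => fun i : Fin (k + 1) => ε n (t + (i : ℕ)) ω)
      = (μ[|{ω | (∀ i ≤ k, aproc v ε n (t + i) ω = 1) ∧
          ∀ i ≤ k, aproc v ε n (t + h + i) ω = 1}]).map
        (fun ω => fun i : Fin (k + 1) => ε n (t + h + (i : ℕ)) ω))
    -- strong mixing and moment conditions
    (hν : 0 < ν) (hμ2a : 1 ≤ μ2) (hμ2b : μ2 < 1 + ν) (hμ2c : 1 + ν < 2 * μ2)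
    (hmix : Summable (fun h : ℕ => alphaMix μ ε h ^ (1 - 1 / (2 * μ2))))
    (hmom : ∃ M : ℝ, ∀ n t : ℕ, 1 ≤ t → t ≤ n →
      ∫⁻ ω, ENNReal.ofReal (|ε n t ω| ^ (2 + 2 * ν)) ∂μ ≤ ENNReal.ofReal M)
    -- kernel and bandwidth assumption
    (hK_cont : Continuous K) (hK_supp : HasCompactSupport K)
    (hK_nonneg : ∀ z, 0 ≤ K z) (hK_le : ∀ z, K z ≤ R)
    (hK_int : ∫ z : ℝ, K z = 1)
    (hb_pos : ∀ n, 0 < b n)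
    (hb0 : Tendsto b atTop (nhds 0))
    (hnb : Tendsto (fun n : ℕ => 1 / ((n : ℝ) * (b n) ^ 2)) atTop (nhds 0))
    (hΔ : ∃ h : ℕ, 1 ≤ h ∧ h ≤ m ∧ Delta v g h ≠ 0) :
    (0 < ∑ h ∈ Finset.Icc 1 m, (Delta v g h) ^ 2) ∧
    TendstoInMeasure μ
      (fun n : ℕ => fun ω => ∑ h ∈ Finset.Icc 1 m, (DeltaHat v ε K b n h ω) ^ 2) atTop
      (fun _ => ∑ h ∈ Finset.Icc 1 m, (Delta v g h) ^ 2) := by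
  obtain ⟨Mv, hMv⟩ := hv_bdd
  obtain ⟨M, hM⟩ := hmom
  have hs : Summable (alphaMix μ ε) := summable_alphaMix μ ε hμ2a hmix
  have hN := tendsto_bandwidth hb_pos hb0 hnb
  have hvc := hv_lip.ae_continuousAt
  have hgc : ∀ h ≤ m, ∀ᵐ u ∂(volume.restrict (Set.Ioc (0 : ℝ) 1)), ContinuousAt (g h) u :=
    fun h hh => (hg_lip h hh).ae_continuousAt
  have hg_pos : ∀ h ≤ m, ∀ s ∈ Set.Ioc (0 : ℝ) 1, 0 < g h s := fun h hh s hs' =>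
    hc.trans (hg_bnd h hh s hs').1
  have hv_sq : ∀ s ∈ Set.Ioc (0 : ℝ) 1, v s ^ 2 ≤ Mv ^ 2 := fun s hs' => by
    rw [← sq_abs]
    exact pow_le_pow_left₀ (abs_nonneg _) (hMv s hs') 2
  have hvg : ∀ h ≤ m, ∀ s ∈ Set.Ioc (0 : ℝ) 1, v s ^ 2 * g h s ≤ Mv ^ 2 := fun h hh s hs' =>
    (mul_le_of_le_one_right (sq_nonneg _) (hg_bnd h hh s hs').2).trans (hv_sq s hs')
  have hvg_pos : ∀ h ≤ m, ∀ s ∈ Set.Ioc (0 : ℝ) 1, 0 < v s ^ 2 * g h s := fun h hh s hs' =>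
    mul_pos (pow_pos (hv_pos s hs') 2) (hg_pos h hh s hs')
  have hvgc : ∀ h ≤ m, ∀ᵐ u ∂(volume.restrict (Set.Ioc (0 : ℝ) 1)),
      ContinuousAt (fun s => v s ^ 2 * g h s) u := fun h hh => by
    filter_upwards [hvc, hgc h hh] with u h1 h2 using (h1.pow 2).mul h2
  -- second moments of the returns
  have hr_int : ∀ n t, 1 ≤ t → t ≤ n → Integrable (fun ω => rproc v ε n t ω ^ 2) μ :=
    fun n t h1 h2 => integrable_rproc_sq hν hε_meas hM h1 h2
  have hr_tail : ∀ e > 0, ∃ A : ℝ, 0 ≤ A ∧ ∀ n t, 1 ≤ t → t ≤ n →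
      ∫ ω, (rproc v ε n t ω ^ 2 - min (rproc v ε n t ω ^ 2) A) ∂μ ≤ e :=
    fun e he => exists_tail_rproc_sq hν hε_meas hMv hM he
  have hr_mean : ∀ n t : ℕ, 1 ≤ t → t ≤ n → ∫ ω, rproc v ε n t ω ^ 2 ∂μ =
      v ((t : ℝ) / n) ^ 2 * g 0 ((t : ℝ) / n) := fun n t h1 h2 => by
    have hp := hprob 0 m.zero_le n t h1 h2
    simp only [Nat.sub_zero, aproc_mul_self] at hp
    exact integral_rproc_sq hε_meas (hg_pos 0 m.zero_le _ (div_mem_Ioc h1 h2)) hp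
      (hv_pos _ (div_mem_Ioc h1 h2)) (hident2 n t h1 h2)
  have hr_bdd : ∀ n t : ℕ, 1 ≤ t → t ≤ n → ∫ ω, rproc v ε n t ω ^ 2 ∂μ ≤ Mv ^ 2 :=
    fun n t h1 h2 => (hr_mean n t h1 h2).trans_le (hvg 0 m.zero_le _ (div_mem_Ioc h1 h2))
  have hphat : ∀ h ≤ m, ∀ u ∈ Set.Ioo (0 : ℝ) 1, ContinuousAt (g h) u → Tendsto
      (fun n : ℕ => ∫ ω, |phat2 v ε K b n h ⌈(n : ℝ) * u⌉₊ ω - g h u| ∂μ) atTop (nhds 0) :=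
    fun h hh u hu huc => tendsto_integral_abs_phat2_sub μ v hε_meas hs hK_cont hK_supp hK_nonneg
      hK_le hK_int hb_pos hb0 hN hu huc h (hprob h hh)
  -- limits of the averages
  have hr_avg : ∀ k {G : ℝ → ℝ} {B : ℝ}, (∀ s ∈ Set.Ioc (0 : ℝ) 1, G s ∈ Set.Icc 0 B) →
      (∀ᵐ u ∂(volume.restrict (Set.Ioc (0 : ℝ) 1)), ContinuousAt G u) →
      TendstoInMeasure μ (fun (n : ℕ) ω => ((n : ℝ) - (k : ℕ))⁻¹ *
        ∑ t ∈ Finset.Icc (k + 1) n, G ((t : ℝ) / n) * rproc v ε n t ω ^ 2) atTop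
        (fun _ => ∫ u in Set.Ioc (0 : ℝ) 1, G u * (v u ^ 2 * g 0 u)) := by
    intro k G B hG hGc
    exact tendstoInMeasure_trimmed_average μ hε_meas hs 0 k (fun n t ω => rproc v ε n t ω ^ 2)
      (fun _ _ _ => sq_nonneg _)
      (fun n t => (measurable_rproc v (measurable_pastField ε le_rfl)).pow_const 2)
      (fun n t => (measurable_rproc v (measurable_futureField ε le_rfl)).pow_const 2)
      hr_int hr_tail hG (fun s hs' => ⟨(hvg_pos 0 m.zero_le s hs').le, hvg 0 m.zero_le s hs'⟩)
      hGc (hvgc 0 m.zero_le) (fun n t h1 h2 => hr_mean n t (by omega) h2)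
  have ha_avg : ∀ h ≤ m, TendstoInMeasure μ (fun (n : ℕ) ω => ((n : ℝ) - (h : ℕ))⁻¹ *
      ∑ t ∈ Finset.Icc (h + 1) n, aproc v ε n t ω * aproc v ε n (t - h) ω) atTop
      (fun _ => ∫ u in Set.Ioc (0 : ℝ) 1, g h u) := by
    intro h hh
    have := tendstoInMeasure_trimmed_average μ hε_meas hs h h
      (fun n t ω => aproc v ε n t ω * aproc v ε n (t - h) ω)
      (fun n t ω => aproc_mul_nonneg v ε n t (t - h) ω)
      (fun n t => (measurable_aproc v (measurable_pastField ε le_rfl)).mul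
        (measurable_aproc v (measurable_pastField ε (Nat.sub_le t h))))
      (fun n t => (measurable_aproc v (measurable_futureField ε (Nat.sub_le t h))).mul
        (measurable_aproc v (measurable_futureField ε le_rfl)))
      (fun n t _ _ => Integrable.of_bound ((measurable_aproc v (hε_meas n t)).mul
        (measurable_aproc v (hε_meas n (t - h)))).aestronglyMeasurable 1
        (Eventually.of_forall fun ω => by
          rw [Real.norm_eq_abs, abs_of_nonneg (aproc_mul_nonneg v ε n t (t - h) ω)]
          exact (aproc_mul_le v ε n t (t - h) ω).trans (aproc_le_one v ε n t ω)))
      (fun e he => ⟨1, zero_le_one, fun n t _ _ => by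
        simp only [min_eq_left ((aproc_mul_le v ε n t (t - h) _).trans (aproc_le_one v ε n t _)),
          sub_self, integral_zero]
        exact he.le⟩)
      (F := g h) (G := fun _ => 1) (B := 1) (B' := 1) (fun _ _ => by simp)
      (fun s hs' => ⟨(hg_pos h hh s hs').le, (hg_bnd h hh s hs').2⟩)
      (Eventually.of_forall fun _ => continuousAt_const) (hgc h hh)
      (fun n t h1 h2 => by
        rw [integral_aproc_mul μ v hε_meas]
        exact hprob h hh n t h1 h2)
    simpa only [one_mul] using this
  have hnum : TendstoInMeasure μ
      (fun (n : ℕ) ω => (n : ℝ)⁻¹ * ∑ t ∈ Finset.Icc 1 n, rproc v ε n t ω ^ 2) atTop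
      (fun _ => ∫ s in Set.Ioc (0 : ℝ) 1, v s ^ 2 * g 0 s) := by
    simpa using hr_avg 0 (G := fun _ => 1) (B := 1) (fun _ _ => by simp)
      (Eventually.of_forall fun _ => continuousAt_const)
  have hnumA : TendstoInMeasure μ
      (fun (n : ℕ) ω => (n : ℝ)⁻¹ * ∑ t ∈ Finset.Icc 1 n, aproc v ε n t ω) atTop
      (fun _ => ∫ s in Set.Ioc (0 : ℝ) 1, g 0 s) := by
    simpa [aproc_mul_self] using ha_avg 0 m.zero_le
  have hgamma : ∀ h ≤ m, TendstoInMeasure μ (fun n => gammaAr2 v ε K b n h) atTop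
      (fun _ => ∫ s in Set.Ioc (0 : ℝ) 1, v s ^ 2 * g h s) := by
    intro h hh
    have h1 := tendstoInMeasure_average_phatRatio_sub μ hε_meas hK_nonneg b h hr_int hr_tail hr_bdd
      hc (fun s hs' => (hg_bnd 0 m.zero_le s hs').1)
      (fun s hs' => ⟨(hg_pos h hh s hs').le, (hg_bnd h hh s hs').2⟩) (hgc 0 m.zero_le) (hgc h hh)
      (hphat 0 m.zero_le) (hphat h hh)
    have h2 := hr_avg h (G := fun s => g h s / g 0 s) (B := c⁻¹)
      (fun s hs' => ⟨div_nonneg (hg_pos h hh s hs').le (hg_pos 0 m.zero_le s hs').le, by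
        rw [← one_div]
        exact div_le_div₀ zero_le_one (hg_bnd h hh s hs').2 hc (hg_bnd 0 m.zero_le s hs').1.le⟩)
      (by
        filter_upwards [hgc 0 m.zero_le, hgc h hh, ae_restrict_mem measurableSet_Ioc]
          with u hu₀ hu hmem using hu.div hu₀ (hg_pos 0 m.zero_le u hmem).ne')
    have h3 := tendstoInMeasure_map_const (fun p : ℝ × ℝ => p.1 + p.2)
      (tendstoInMeasure_prod_const h1 h2) (by fun_prop)
    refine h3.congr (fun n => Eventually.of_forall fun ω => ?_) (Eventually.of_forall fun _ => ?_)
    · simp only [gammaAr2, phatRatio]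
      rw [← mul_add, ← Finset.sum_add_distrib]
      congr 1
      exact Finset.sum_congr rfl fun t _ => by ring
    · simp only [zero_add]
      refine setIntegral_congr_fun measurableSet_Ioc fun s hs' => ?_
      have := (hg_pos 0 m.zero_le s hs').ne'
      field_simp
  have hDelta : ∀ h ∈ Finset.Icc 1 m, TendstoInMeasure μ
      (fun n ω => DeltaHat v ε K b n h ω ^ 2) atTop (fun _ => Delta v g h ^ 2) := by
    intro h hmem
    have hh := (Finset.mem_Icc.1 hmem).2
    have h1 := tendstoInMeasure_div hnum (hgamma h hh)
      (setIntegral_pos_of_ae_continuousAt (hvg_pos h hh) (hvg h hh) (hvgc h hh)).ne'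
    have h2 := tendstoInMeasure_div hnumA (ha_avg h hh)
      (setIntegral_pos_of_ae_continuousAt (hg_pos h hh) (fun s hs' => (hg_bnd h hh s hs').2)
        (hgc h hh)).ne'
    have h3 := tendstoInMeasure_map_const (fun p : ℝ × ℝ => (p.1 - p.2) ^ 2)
      (tendstoInMeasure_prod_const h1 h2) (by fun_prop)
    simpa only [DeltaHat, Delta] using h3
  obtain ⟨h, h1, hm, hne⟩ := hΔ
  exact ⟨Finset.sum_pos' (fun _ _ => sq_nonneg _)
    ⟨h, Finset.mem_Icc.2 ⟨h1, hm⟩, sq_pos_of_ne_zero hne⟩, tendstoInMeasure_finset_sum _ hDelta⟩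

end ZeroReturnsNS
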